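/- arXiv:1712.05129 — 8 statements merged into one kernel-verified Lean document; each statement's English description precedes it below -/
import Mathlib

section
/- Let G be a countable group, let F and F₁ be finite subsets of G, let ε > 0, and let A, B be arbitrary subsets of G. If F₁ is (F,ε)-invariant, i.e. |FF₁ △ F₁| < ε|F₁|, then D_{F₁}(B,A) ≥ D_F(B,A) − 4ε. -/
/-!
STATEMENT 0 (Lemma `bdc` of the paper):
If `F₁` is `(F,ε)`-invariant, i.e. `|F F₁ △ F₁| < ε|F₁|`, then
`D_{F₁}(B,A) ≥ D_F(B,A) − 4ε`, where
`D_F(B,A) = inf_{g ∈ G} (|B ∩ Fg| − |A ∩ Fg|)/|F|`.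
-/

open Filter Topology Pointwise

/-- `(|B ∩ Fg|)/|F|`, the (normalized) count of elements of the right translate `Fg`
belonging to `B`. -/
noncomputable def cnt {G : Type*} [Group G] (F : Finset G) (B : Set G) (g : G) : ℝ :=
  ((B ∩ ((F : Set G) * {g})).ncard : ℝ) / F.card

/-- `D_F(B,A) = inf_{g ∈ G} (|B ∩ Fg| − |A ∩ Fg|)/|F|`. -/
noncomputable def advD {G : Type*} [Group G] (F : Finset G) (B A : Set G) : ℝ :=
  ⨅ g : G, (cnt F B g - cnt F A g)

open Classical in
noncomputable def phi0 {G : Type*} (B A : Set G) (x : G) : ℝ :=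
  (if x ∈ B then 1 else 0) - (if x ∈ A then 1 else 0)

lemma phi0_abs {G : Type*} (B A : Set G) (x : G) : |phi0 B A x| ≤ 1 := by
  unfold phi0; split_ifs <;> simp

open Classical in
lemma cnt_eq0 {G : Type*} [Group G] (F : Finset G) (B : Set G) (g : G) :
    cnt F B g = (∑ x ∈ F, if x * g ∈ B then (1:ℝ) else 0) / F.card := by
  unfold cnt
  congr 1
  have h : B ∩ ((F : Set G) * {g}) =
      (((F.filter (fun x => x * g ∈ B)).image (fun x => x * g) : Finset G) : Set G) := by
    ext y
    simp only [Set.mul_singleton, Set.mem_inter_iff, Set.mem_image, Finset.mem_coe,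
      Finset.mem_image, Finset.mem_filter]
    constructor
    · rintro ⟨hy, x, hx, rfl⟩
      exact ⟨x, ⟨hx, hy⟩, rfl⟩
    · rintro ⟨x, ⟨hx, hy⟩, rfl⟩
      exact ⟨hy, x, hx, rfl⟩
  rw [h, Set.ncard_coe_finset, Finset.card_image_of_injective _ (mul_left_injective g)]
  simp

lemma cnt_sub0 {G : Type*} [Group G] (F : Finset G) (B A : Set G) (g : G) :
    cnt F B g - cnt F A g = (∑ x ∈ F, phi0 B A (x * g)) / F.card := by
  rw [cnt_eq0, cnt_eq0, ← sub_div, ← Finset.sum_sub_distrib]; rfl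

lemma bdd0 {G : Type*} [Group G] (F : Finset G) (hF : F.Nonempty) (B A : Set G) :
    BddBelow (Set.range fun g : G => cnt F B g - cnt F A g) := by
  refine ⟨-1, ?_⟩
  rintro _ ⟨g, rfl⟩
  have hc : (0:ℝ) < F.card := by exact_mod_cast hF.card_pos
  simp only
  rw [cnt_sub0, le_div_iff₀ hc]
  have : ∑ x ∈ F, (-1:ℝ) ≤ ∑ x ∈ F, phi0 B A (x * g) :=
    Finset.sum_le_sum fun x _ => (abs_le.1 (phi0_abs B A _)).1
  simpa using this

theorem stmt0 {G : Type*} [Group G] [Countable G]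
    (F F₁ : Finset G) (hF : F.Nonempty) (hF₁ : F₁.Nonempty)
    (ε : ℝ) (hε : 0 < ε) (A B : Set G)
    (hinv : ((symmDiff ((F : Set G) * (F₁ : Set G)) (F₁ : Set G)).ncard : ℝ) < ε * F₁.card) :
    advD F B A - 4 * ε ≤ advD F₁ B A := by
  classical
  refine le_ciInf fun g => ?_
  have hc : (0:ℝ) < F.card := by exact_mod_cast hF.card_pos
  have hc₁ : (0:ℝ) < F₁.card := by exact_mod_cast hF₁.card_pos
  rw [cnt_sub0, le_div_iff₀ hc₁]
  have h1 : ∀ y : G, advD F B A * F.card ≤ ∑ x ∈ F, phi0 B A (x * (y * g)) := fun y => by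
    have := ciInf_le (bdd0 F hF B A) (y * g)
    rw [cnt_sub0, le_div_iff₀ hc] at this
    exact this
  have h2 : ∀ f ∈ F, ∑ y ∈ F₁, phi0 B A (f * (y * g)) ≤
      ∑ y ∈ F₁, phi0 B A (y * g) + 2 * ε * F₁.card := by
    intro f hf
    set P := F₁.image (fun y => f * y) with hP
    have e : ∑ y ∈ F₁, phi0 B A (f * (y * g)) = ∑ y ∈ P, phi0 B A (y * g) := by
      rw [hP, Finset.sum_image (fun a _ b _ h => mul_left_cancel h)]
      simp [mul_assoc]
    have hcard : (P \ F₁).card = (F₁ \ P).card :=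
      Finset.card_sdiff_comm (Finset.card_image_of_injective _ (mul_right_injective f))
    have hlt : ((P \ F₁).card : ℝ) ≤ ε * F₁.card := by
      refine le_trans ?_ hinv.le
      rw [← Set.ncard_coe_finset]
      norm_cast
      refine Finset.card_le_card ?_
      intro x hx
      simp only [hP, Finset.mem_sdiff, Finset.mem_image] at hx
      obtain ⟨⟨y, hy, rfl⟩, hx⟩ := hx
      rw [Finset.mem_symmDiff]
      exact Or.inl ⟨Finset.mul_mem_mul hf hy, hx⟩
    have hs := Finset.sum_sdiff_sub_sum_sdiff (s₁ := F₁) (s₂ := P) (f := fun y => phi0 B A (y * g))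
    have a1 : ∑ y ∈ P \ F₁, phi0 B A (y * g) ≤ ∑ y ∈ P \ F₁, (1:ℝ) :=
      Finset.sum_le_sum fun x _ => (abs_le.1 (phi0_abs B A _)).2
    have a2 : ∑ y ∈ F₁ \ P, (-1:ℝ) ≤ ∑ y ∈ F₁ \ P, phi0 B A (y * g) :=
      Finset.sum_le_sum fun x _ => (abs_le.1 (phi0_abs B A _)).1
    simp only [Finset.sum_const, nsmul_eq_mul, ← hcard] at a1 a2
    rw [e]
    linarith
  have h3 := Finset.sum_le_sum (s := F₁) fun y _ => h1 y
  rw [Finset.sum_comm] at h3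
  have h4 := h3.trans (Finset.sum_le_sum h2)
  simp only [Finset.sum_const, nsmul_eq_mul] at h4
  have h5 : advD F B A * F₁.card ≤ ∑ y ∈ F₁, phi0 B A (y * g) + 2 * ε * F₁.card := by
    refine le_of_mul_le_mul_left ?_ hc
    linarith
  have := mul_pos hε hc₁
  linarith
end

section
/- Let G be a countable amenable group and let A, B ⊆ G. For any Følner sequence (F_n) in G, the sequences D_{F_n}(B), D̄_{F_n}(B) and D_{F_n}(B,A) converge (so the limsup and liminf in the definitions of D(B), D̄(B), D(B,A) are in fact limits), the limits are independent of the choice of the Følner sequence, and D(B) = sup_F D_F(B), D̄(B) = inf_F D̄_F(B), D(B,A) = sup_F D_F(B,A), where F ranges over all finite subsets of G. -/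
/-!
STATEMENT 1 (Lemma `bd` of the paper):
For any Følner sequence `(F_n)`, the sequences `D_{F_n}(B)`, `D̄_{F_n}(B)`, `D_{F_n}(B,A)`
converge, their limits do not depend on the Følner sequence, and they equal
`sup_F D_F(B)`, `inf_F D̄_F(B)`, `sup_F D_F(B,A)` respectively, with `F` ranging over
all (nonempty) finite subsets of `G`.
-/

open Filter Topology Pointwise

/-- lower density `D_F(B) = inf_g |B ∩ Fg|/|F|`. -/
noncomputable def lowD {G : Type*} [Group G] (F : Finset G) (B : Set G) : ℝ :=
  ⨅ g : G, cnt F B g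

/-- upper density `D̄_F(B) = sup_g |B ∩ Fg|/|F|`. -/
noncomputable def uppD {G : Type*} [Group G] (F : Finset G) (B : Set G) : ℝ :=
  ⨆ g : G, cnt F B g

/-- A (left) Følner sequence: `|gF_n ∩ F_n|/|F_n| → 1` for every `g ∈ G`. -/
def IsFolner {G : Type*} [Group G] (F : ℕ → Finset G) : Prop :=
  (∀ n, (F n).Nonempty) ∧
  ∀ g : G, Tendsto
    (fun n => (((({g} : Set G) * (F n : Set G)) ∩ (F n : Set G)).ncard : ℝ) / (F n).card)
    atTop (𝓝 1)


noncomputable def avg {G : Type*} [Group G] (F : Finset G) (f : G → ℝ) (g : G) : ℝ :=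
  (∑ x ∈ F, f (x * g)) / F.card

noncomputable def infAvg {G : Type*} [Group G] (F : Finset G) (f : G → ℝ) : ℝ :=
  ⨅ g : G, avg F f g

lemma cnt_eq {G : Type*} [Group G] (F : Finset G) (B : Set G) (g : G) :
    cnt F B g = avg F (B.indicator (fun _ => (1 : ℝ))) g := by
  classical
  unfold cnt avg
  congr 1
  have h : B ∩ ((F : Set G) * {g}) = (((F.filter (fun x => x * g ∈ B)).image (· * g) : Finset G) : Set G) := by
    ext y
    simp only [Set.mul_singleton, Set.mem_inter_iff, Set.mem_image, Finset.coe_image,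
      Finset.coe_filter, Set.mem_setOf_eq, Finset.mem_coe]
    constructor
    · rintro ⟨hy, x, hx, rfl⟩
      exact ⟨x, ⟨hx, hy⟩, rfl⟩
    · rintro ⟨x, ⟨hx, hy⟩, rfl⟩
      exact ⟨hy, x, hx, rfl⟩
  rw [h, Set.ncard_coe_finset, Finset.card_image_of_injective _ (mul_left_injective g)]
  simp [Set.indicator_apply, Finset.sum_ite]

lemma abs_avg_le {G : Type*} [Group G] (F : Finset G) (f : G → ℝ) (hf : ∀ x, |f x| ≤ 1) (g : G) :
    |avg F f g| ≤ 1 := by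
  unfold avg
  rw [abs_div, Nat.abs_cast]
  apply div_le_one_of_le₀ _ (Nat.cast_nonneg _)
  calc |∑ x ∈ F, f (x * g)| ≤ ∑ x ∈ F, |f (x * g)| := Finset.abs_sum_le_sum_abs _ _
    _ ≤ ∑ x ∈ F, (1 : ℝ) := Finset.sum_le_sum (fun x _ => hf _)
    _ = F.card := by simp

lemma bdd_avg {G : Type*} [Group G] (F : Finset G) (f : G → ℝ) (hf : ∀ x, |f x| ≤ 1) :
    BddBelow (Set.range (avg F f)) := by
  refine ⟨-1, ?_⟩
  rintro _ ⟨g, rfl⟩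
  exact (abs_le.1 (abs_avg_le F f hf g)).1

lemma infAvg_le_one {G : Type*} [Group G] (F : Finset G) (f : G → ℝ) (hf : ∀ x, |f x| ≤ 1) :
    infAvg F f ≤ 1 :=
  (ciInf_le (bdd_avg F f hf) 1).trans (abs_le.1 (abs_avg_le F f hf 1)).2

noncomputable def rat {G : Type*} [Group G] (E : Finset G) (x : G) : ℝ :=
  (((({x} : Set G) * (E : Set G)) ∩ (E : Set G)).ncard : ℝ) / E.card

lemma shift {G : Type*} [Group G] (E : Finset G) (hE : E.Nonempty) (f : G → ℝ)
    (hf : ∀ x, |f x| ≤ 1) (x : G) :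
    ∑ y ∈ E, f (x * y) ≤ ∑ y ∈ E, f y + 2 * (1 - rat E x) * E.card := by
  classical
  set E' := E.image (x * ·) with hE'
  have hc : E'.card = E.card := Finset.card_image_of_injective _ (mul_right_injective x)
  have hr : rat E x * E.card = (E' ∩ E).card := by
    unfold rat
    have : (({x} : Set G) * (E : Set G)) ∩ (E : Set G) = ((E' ∩ E : Finset G) : Set G) := by
      simp [hE', Set.singleton_mul]
    rw [this, Set.ncard_coe_finset]
    have : (E.card : ℝ) ≠ 0 := by exact_mod_cast hE.card_pos.ne'
    field_simp
  have h1 : ∑ y ∈ E, f (x * y) = ∑ y ∈ E', f y := by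
    rw [hE', Finset.sum_image (fun a _ b _ h => mul_right_injective x h)]
  have h2 := Finset.sum_inter_add_sum_sdiff E' E f
  have h3 := Finset.sum_inter_add_sum_sdiff E E' f
  have c2 := Finset.card_inter_add_card_sdiff E' E
  have c3 := Finset.card_inter_add_card_sdiff E E'
  rw [Finset.inter_comm E E'] at h3 c3
  have b2 : ∑ y ∈ E' \ E, f y ≤ (E' \ E).card := by
    calc _ ≤ ∑ y ∈ E' \ E, (1 : ℝ) := Finset.sum_le_sum (fun y _ => (abs_le.1 (hf y)).2)
      _ = _ := by simp
  have b3 : -((E \ E').card : ℝ) ≤ ∑ y ∈ E \ E', f y := by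
    calc -((E \ E').card : ℝ) = ∑ y ∈ E \ E', (-1 : ℝ) := by simp
      _ ≤ _ := Finset.sum_le_sum (fun y _ => (abs_le.1 (hf y)).1)
  have c2' : ((E' ∩ E).card : ℝ) + (E' \ E).card = E.card := by rw [← hc]; exact_mod_cast c2
  have c3' : ((E' ∩ E).card : ℝ) + (E \ E').card = E.card := by exact_mod_cast c3
  rw [h1]
  nlinarith

lemma key {G : Type*} [Group G] (F E : Finset G) (hF : F.Nonempty) (hE : E.Nonempty) (f : G → ℝ)
    (hf : ∀ x, |f x| ≤ 1) :
    infAvg F f - (∑ x ∈ F, 2 * (1 - rat E x)) / F.card ≤ infAvg E f := by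
  apply le_ciInf
  intro g
  have hF0 : (0 : ℝ) < F.card := by exact_mod_cast hF.card_pos
  have hE0 : (0 : ℝ) < E.card := by exact_mod_cast hE.card_pos
  have h1 : E.card * infAvg F f ≤ ∑ y ∈ E, avg F f (y * g) := by
    rw [← nsmul_eq_mul]
    exact Finset.card_nsmul_le_sum _ _ _ (fun y _ => ciInf_le (bdd_avg F f hf) _)
  have h2 : (∑ y ∈ E, avg F f (y * g)) * F.card = ∑ x ∈ F, ∑ y ∈ E, f (x * y * g) := by
    rw [Finset.sum_comm, Finset.sum_mul]
    refine Finset.sum_congr rfl fun y _ => ?_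
    unfold avg
    rw [div_mul_cancel₀ _ hF0.ne']
    simp [mul_assoc]
  have h3 : ∑ x ∈ F, ∑ y ∈ E, f (x * y * g) ≤
      ∑ x ∈ F, (∑ y ∈ E, f (y * g) + 2 * (1 - rat E x) * E.card) :=
    Finset.sum_le_sum fun x _ => shift E hE (fun z => f (z * g)) (fun z => hf _) x
  rw [Finset.sum_add_distrib, ← Finset.sum_mul, Finset.sum_const, nsmul_eq_mul] at h3
  have h4 : ∑ y ∈ E, f (y * g) = avg E f g * E.card := by
    unfold avg
    rw [div_mul_cancel₀ _ hE0.ne']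
  rw [h4] at h3
  set S := ∑ x ∈ F, 2 * (1 - rat E x)
  rw [sub_le_iff_le_add, ← mul_le_mul_iff_of_pos_right (mul_pos hE0 hF0)]
  have h5 : (avg E f g + S / F.card) * (E.card * F.card) =
    F.card * (avg E f g * E.card) + S * E.card := by field_simp
  rw [h5]
  nlinarith [mul_le_mul_of_nonneg_right h1 hF0.le]

lemma main {G : Type*} [Group G] (Fs : ℕ → Finset G) (hFs : IsFolner Fs) (f : G → ℝ)
    (hf : ∀ x, |f x| ≤ 1) :
    Tendsto (fun n => infAvg (Fs n) f) atTop
      (𝓝 (⨆ F : {F : Finset G // F.Nonempty}, infAvg F.1 f)) := by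
  have hb : BddAbove (Set.range fun F : {F : Finset G // F.Nonempty} => infAvg F.1 f) := by
    refine ⟨1, ?_⟩
    rintro _ ⟨F, rfl⟩
    exact infAvg_le_one _ _ hf
  have : Nonempty {F : Finset G // F.Nonempty} := ⟨⟨{1}, by simp⟩⟩
  rw [tendsto_order]
  constructor
  · intro a ha
    obtain ⟨⟨F, hF⟩, haF⟩ := exists_lt_of_lt_ciSup ha
    have ht : Tendsto (fun n => infAvg F f - (∑ x ∈ F, 2 * (1 - rat (Fs n) x)) / F.card) atTop
        (𝓝 (infAvg F f - (∑ x ∈ F, 2 * (1 - (1 : ℝ))) / F.card)) := by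
      refine tendsto_const_nhds.sub (Tendsto.div_const (tendsto_finsetSum _ fun x _ => ?_) _)
      exact (tendsto_const_nhds.sub (hFs.2 x)).const_mul 2
    simp only [sub_self, mul_zero, Finset.sum_const_zero, zero_div, sub_zero] at ht
    filter_upwards [ht.eventually_const_lt haF] with n hn
    exact hn.trans_le (key F (Fs n) hF (hFs.1 n) f hf)
  · intro a ha
    exact Eventually.of_forall fun n => (le_ciSup hb ⟨Fs n, hFs.1 n⟩).trans_lt ha

lemma avg_neg {G : Type*} [Group G] (F : Finset G) (f : G → ℝ) (g : G) :
    avg F (fun x => - f x) g = - avg F f g := by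
  simp [avg, neg_div]

lemma avg_sub {G : Type*} [Group G] (F : Finset G) (f h : G → ℝ) (g : G) :
    avg F (fun x => f x - h x) g = avg F f g - avg F h g := by
  simp [avg, sub_div]

lemma real_iInf_neg {ι : Sort*} (u : ι → ℝ) : ⨅ i, - u i = - ⨆ i, u i := by
  rw [iInf, iSup, Real.sInf_def, ← Set.image_neg_eq_neg, ← Set.range_comp]
  simp [Function.comp_def]

theorem stmt1 {G : Type*} [Group G] [Countable G] (A B : Set G)
    (Fs : ℕ → Finset G) (hFs : IsFolner Fs) :
    Tendsto (fun n => lowD (Fs n) B) atTop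
      (𝓝 (⨆ F : {F : Finset G // F.Nonempty}, lowD F.1 B)) ∧
    Tendsto (fun n => uppD (Fs n) B) atTop
      (𝓝 (⨅ F : {F : Finset G // F.Nonempty}, uppD F.1 B)) ∧
    Tendsto (fun n => advD (Fs n) B A) atTop
      (𝓝 (⨆ F : {F : Finset G // F.Nonempty}, advD F.1 B A)) := by
  have hB : ∀ (C : Set G) (x : G), 0 ≤ C.indicator (fun _ => (1 : ℝ)) x ∧
      C.indicator (fun _ => (1 : ℝ)) x ≤ 1 := by
    intro C x
    by_cases h : x ∈ C <;> simp [h]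
  refine ⟨?_, ?_, ?_⟩
  · have e : ∀ F : Finset G, lowD F B = infAvg F (B.indicator (fun _ => (1 : ℝ))) := fun F => by
      simp only [lowD, infAvg, cnt_eq]
    simp only [e]
    exact main Fs hFs _ fun x => abs_le.2 ⟨by linarith [hB B x], (hB B x).2⟩
  · have e : ∀ F : Finset G, infAvg F (fun x => - B.indicator (fun _ => (1 : ℝ)) x) = - uppD F B :=
      fun F => by simp only [uppD, infAvg, cnt_eq, avg_neg, real_iInf_neg]
    have := (main Fs hFs (fun x => - B.indicator (fun _ => (1 : ℝ)) x)
      fun x => abs_le.2 ⟨by linarith [hB B x], by linarith [hB B x]⟩).neg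
    simp only [e, ← real_iInf_neg, neg_neg] at this
    exact this
  · have e : ∀ F : Finset G, advD F B A = infAvg F (fun x => B.indicator (fun _ => (1 : ℝ)) x -
        A.indicator (fun _ => (1 : ℝ)) x) := fun F => by
      simp only [advD, infAvg, cnt_eq, avg_sub]
    simp only [e]
    exact main Fs hFs _ fun x => abs_le.2 ⟨by linarith [hB B x, hB A x], by linarith [hB B x, hB A x]⟩
end

section
/- Let G be a countable amenable group. Let (A_k)_{k≥1} be a sequence of nonempty subsets of G and (g_k)_{k≥1} a sequence of elements of G such that the union ⋃_{k=1}^∞ A_k is finite and A = ⋃_{k=1}^∞ A_k g_k is a disjoint union. For each k let B_k ⊆ A_k and set B = ⋃_{k=1}^∞ B_k g_k. Then D(B) ≥ D(A) · inf_k (|B_k|/|A_k|). -/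
/-!
STATEMENT 3 (Lemma 1.5 of the paper):
If `(A_k)` are nonempty subsets of `G` with finite union, `(g_k)` elements of `G` such that
`A = ⋃ A_k g_k` is a disjoint union, and `B_k ⊆ A_k`, `B = ⋃ B_k g_k`, then
`D(B) ≥ D(A) · inf_k |B_k|/|A_k|`, where `D` is the lower Banach density along a Følner
sequence.
-/

open Filter Topology Pointwise

theorem aux_core {α : Type*} (X : Finset α) (A B : ℕ → Set α) (hne : ∀ k, (A k).Nonempty)
    (hd : Pairwise fun k l => Disjoint (A k) (A l)) (hB : ∀ k, B k ⊆ A k)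
    (c : ℝ) (hc : 0 ≤ c) (hcB : ∀ k, c * (A k).ncard ≤ (B k).ncard)
    (E : Set α) (hEf : E.Finite) (hE : ∀ x ∈ X, ∀ k, x ∈ A k → ¬ A k ⊆ (X : Set α) → x ∈ E) :
    c * (((⋃ k, A k) ∩ (X : Set α)).ncard - E.ncard) ≤ (((⋃ k, B k) ∩ (X : Set α)).ncard : ℝ) := by
  classical
  choose a ha using hne
  have hSf : {k | A k ⊆ (X : Set α)}.Finite := by
    apply Set.Finite.of_finite_image (f := a)
    · apply X.finite_toSet.subset
      rintro _ ⟨k, hk, rfl⟩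
      exact hk (ha k)
    · intro k _ l _ hkl
      by_contra hne
      exact Set.disjoint_left.1 (hd hne) (ha k) (hkl ▸ ha l)
  set S := hSf.toFinset with hS
  have hSm : ∀ k ∈ S, A k ⊆ (X : Set α) := by intro k hk; simpa [hS] using hk
  have key : ∀ C : ℕ → Set α, (∀ k, C k ⊆ A k) →
      (⋃ k ∈ S, C k).ncard = ∑ k ∈ S, (C k).ncard := by
    intro C hC
    have hf : ∀ k ∈ S, (C k).Finite := fun k hk =>
      X.finite_toSet.subset ((hC k).trans (hSm k hk))
    clear_value S
    clear hS
    induction S using Finset.induction_on with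
    | empty => simp
    | insert k T hk ih =>
      have f1 : (C k).Finite := hf k (Finset.mem_insert_self _ _)
      have f2 : (⋃ l ∈ T, C l).Finite :=
        T.finite_toSet.biUnion fun l hl => hf l (Finset.mem_insert_of_mem hl)
      have f3 : Disjoint (C k) (⋃ l ∈ T, C l) := by
        rw [Set.disjoint_iUnion₂_right]
        intro l hl
        have hkl : k ≠ l := by
          rintro rfl
          exact hk hl
        exact (hd hkl).mono (hC k) (hC l)
      rw [Finset.sum_insert hk, Finset.set_biUnion_insert, Set.ncard_union_eq f3 f1 f2, ih]
      · exact fun l hl => hSm l (Finset.mem_insert_of_mem hl)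
      · exact fun l hl => hf l (Finset.mem_insert_of_mem hl)
  have h1 : ((⋃ k, A k) ∩ (X : Set α)).ncard ≤ (⋃ k ∈ S, A k).ncard + E.ncard := by
    refine le_trans (Set.ncard_le_ncard ?_ ?_) (Set.ncard_union_le _ _)
    · rintro x ⟨hx, hxX⟩
      obtain ⟨k, hk⟩ := Set.mem_iUnion.1 hx
      by_cases h : A k ⊆ (X : Set α)
      · left
        exact Set.mem_iUnion₂.2 ⟨k, by simpa [hS] using h, hk⟩
      · right
        exact hE x hxX k hk h
    · exact (S.finite_toSet.biUnion fun k hk => X.finite_toSet.subset (hSm k hk)).union hEf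
  have h2 : (⋃ k ∈ S, B k).ncard ≤ ((⋃ k, B k) ∩ (X : Set α)).ncard := by
    apply Set.ncard_le_ncard
    · intro x hx
      obtain ⟨k, hk, hx⟩ := Set.mem_iUnion₂.1 hx
      exact ⟨Set.mem_iUnion.2 ⟨k, hx⟩, hSm k hk (hB k hx)⟩
    · exact X.finite_toSet.subset Set.inter_subset_right
  rw [key B hB] at h2
  rw [key A (fun _ => subset_rfl)] at h1
  have h1' : (((⋃ k, A k) ∩ (X : Set α)).ncard : ℝ) - E.ncard ≤ ∑ k ∈ S, ((A k).ncard : ℝ) := by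
    have : (((⋃ k, A k) ∩ (X : Set α)).ncard : ℝ) ≤ ∑ k ∈ S, ((A k).ncard : ℝ) + E.ncard := by
      exact_mod_cast h1
    linarith
  have h2' : ∑ k ∈ S, ((B k).ncard : ℝ) ≤ (((⋃ k, B k) ∩ (X : Set α)).ncard : ℝ) := by
    exact_mod_cast h2
  calc _ ≤ c * ∑ k ∈ S, ((A k).ncard : ℝ) := mul_le_mul_of_nonneg_left h1' hc
    _ = ∑ k ∈ S, c * ((A k).ncard : ℝ) := Finset.mul_sum _ _ _
    _ ≤ ∑ k ∈ S, ((B k).ncard : ℝ) := Finset.sum_le_sum fun k _ => hcB k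
    _ ≤ _ := h2'

noncomputable def auxErr {G : Type*} [Group G] (F : Finset G) (K : Finset (G × G)) : ℝ :=
  ∑ p ∈ K, (1 - (((({p.1 * p.2⁻¹} : Set G) * (F : Set G)) ∩ (F : Set G)).ncard : ℝ) / F.card)

theorem auxErr_tendsto {G : Type*} [Group G] (F : ℕ → Finset G) (hF : IsFolner F)
    (K : Finset (G × G)) : Tendsto (fun n => auxErr (F n) K) atTop (𝓝 0) := by
  have : Tendsto (fun n => auxErr (F n) K) atTop (𝓝 (∑ p ∈ K, (1 - 1 : ℝ))) :=
    tendsto_finsetSum _ fun p _ => tendsto_const_nhds.sub (hF.2 _)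
  simpa using this

theorem aux_bdry {G : Type*} [Group G] (F : Finset G) (hF : F.Nonempty) (K : Finset (G × G)) (h : G) :
    ((⋃ p ∈ K, (((F : Set G) \ ({p.1 * p.2⁻¹} * (F : Set G))) * {h} : Set G)).ncard : ℝ)
      ≤ auxErr F K * F.card := by
  have hc : (F.card : ℝ) ≠ 0 := by exact_mod_cast hF.card_pos.ne'
  have h1 : (⋃ p ∈ K, (((F : Set G) \ ({p.1 * p.2⁻¹} * (F : Set G))) * {h} : Set G)).ncard ≤
      ∑ p ∈ K, (((F : Set G) \ ({p.1 * p.2⁻¹} * (F : Set G))) * {h} : Set G).ncard :=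
    Finset.set_ncard_biUnion_le _ _
  refine le_trans (Nat.cast_le.2 h1) ?_
  rw [auxErr, Finset.sum_mul, Nat.cast_sum]
  apply Finset.sum_le_sum
  intro p _
  rw [Set.mul_singleton, Set.ncard_image_of_injective _ (mul_left_injective h)]
  have := Set.ncard_inter_add_ncard_sdiff_eq_ncard (F : Set G) ({p.1 * p.2⁻¹} * (F : Set G)) F.finite_toSet
  rw [Set.ncard_coe_finset, Set.inter_comm, add_comm] at this
  have h3 : ((((F : Set G) \ ({p.1 * p.2⁻¹} * (F : Set G))).ncard : ℝ) +
    ((({p.1 * p.2⁻¹} * (F : Set G)) ∩ (F : Set G)).ncard : ℝ)) = F.card := by exact_mod_cast this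
  rw [sub_mul, div_mul_cancel₀ _ hc]
  linarith

theorem cnt_nonneg' {G : Type*} [Group G] (F : Finset G) (B : Set G) (g : G) : 0 ≤ cnt F B g := by
  unfold cnt; positivity

theorem cnt_le_one' {G : Type*} [Group G] (F : Finset G) (B : Set G) (g : G) : cnt F B g ≤ 1 := by
  unfold cnt
  apply div_le_one_of_le₀ _ (by positivity)
  have : (B ∩ ((F : Set G) * {g})).ncard ≤ ((F : Set G) * {g}).ncard :=
    Set.ncard_le_ncard Set.inter_subset_right (F.finite_toSet.mul (Set.finite_singleton g))
  rw [Set.mul_singleton, Set.ncard_image_of_injective _ (mul_left_injective g),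
    Set.ncard_coe_finset] at this
  rw [Set.mul_singleton]
  exact_mod_cast this

theorem bdd_cnt {G : Type*} [Group G] (F : Finset G) (B : Set G) :
    BddBelow (Set.range fun g => cnt F B g) :=
  ⟨0, by rintro _ ⟨g, rfl⟩; exact cnt_nonneg' F B g⟩

theorem lowD_nonneg' {G : Type*} [Group G] (F : Finset G) (B : Set G) : 0 ≤ lowD F B :=
  le_ciInf fun g => cnt_nonneg' F B g

theorem lowD_le_one' {G : Type*} [Group G] (F : Finset G) (B : Set G) : lowD F B ≤ 1 :=
  (ciInf_le (bdd_cnt F B) 1).trans (cnt_le_one' F B 1)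

theorem stmt3 {G : Type*} [Group G] [Countable G]
    (Fs : ℕ → Finset G) (hFs : IsFolner Fs)
    (A : ℕ → Set G) (g : ℕ → G)
    (hne : ∀ k, (A k).Nonempty)
    (hfin : (⋃ k, A k).Finite)
    (hdisj : Pairwise fun k l => Disjoint (A k * ({g k} : Set G)) (A l * ({g l} : Set G)))
    (B : ℕ → Set G) (hB : ∀ k, B k ⊆ A k) :
    limsup (fun n => lowD (Fs n) (⋃ k, A k * ({g k} : Set G))) atTop *
        (⨅ k, ((B k).ncard : ℝ) / (A k).ncard)
      ≤ limsup (fun n => lowD (Fs n) (⋃ k, B k * ({g k} : Set G))) atTop := by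
  classical
  set c : ℝ := ⨅ k, ((B k).ncard : ℝ) / (A k).ncard with hc
  have hAf : ∀ k, (A k).Finite := fun k => hfin.subset (Set.subset_iUnion A k)
  have hc0 : 0 ≤ c := le_ciInf fun k => by positivity
  have hcb : ∀ k, c * (A k).ncard ≤ (B k).ncard := by
    intro k
    have hp : (0 : ℝ) < (A k).ncard := by
      exact_mod_cast (Set.ncard_pos (hAf k)).2 (hne k)
    rw [← le_div_iff₀ hp]
    exact ciInf_le ⟨0, by rintro _ ⟨k, rfl⟩; positivity⟩ k
  set K : Finset (G × G) := hfin.toFinset ×ˢ hfin.toFinset with hK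
  have hn : ∀ (C : Set G) (k : ℕ), (C * ({g k} : Set G)).ncard = C.ncard := by
    intro C k
    rw [Set.mul_singleton, Set.ncard_image_of_injective _ (mul_left_injective _)]
  have main : ∀ n, c * lowD (Fs n) (⋃ k, A k * ({g k} : Set G)) - c * auxErr (Fs n) K ≤
      lowD (Fs n) (⋃ k, B k * ({g k} : Set G)) := by
    intro n
    refine le_ciInf fun h => ?_
    have hcd : (0 : ℝ) < (Fs n).card := by exact_mod_cast (hFs.1 n).card_pos
    have hX : (((Fs n).image (· * h) : Finset G) : Set G) = (Fs n : Set G) * {h} := by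
      rw [Set.mul_singleton, Finset.coe_image]
    have core := aux_core ((Fs n).image (· * h)) (fun k => A k * ({g k} : Set G))
      (fun k => B k * ({g k} : Set G)) (fun k => (hne k).mul (Set.singleton_nonempty _)) hdisj
      (fun k => Set.mul_subset_mul_right (hB k)) c hc0
      (fun k => by simpa only [hn] using hcb k)
      (⋃ p ∈ K, (((Fs n : Set G) \ ({p.1 * p.2⁻¹} * (Fs n : Set G))) * {h} : Set G))
      (K.finite_toSet.biUnion fun p _ =>
        ((Fs n).finite_toSet.subset Set.sdiff_subset).mul (Set.finite_singleton h))
      (by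
        intro x hx k hxk hnot
        obtain ⟨f, hf, rfl⟩ := Finset.mem_image.1 hx
        rw [Set.mul_singleton] at hxk
        obtain ⟨a, ha, hax⟩ := hxk
        obtain ⟨y, hy, hyX⟩ := Set.not_subset.1 hnot
        rw [Set.mul_singleton] at hy
        obtain ⟨b, hb, rfl⟩ := hy
        have hax' : a * g k = f * h := hax
        refine Set.mem_iUnion₂.2 ⟨(a, b), ?_, ?_⟩
        · simp only [hK, Finset.mem_product, Set.Finite.mem_toFinset]
          exact ⟨Set.mem_iUnion.2 ⟨k, ha⟩, Set.mem_iUnion.2 ⟨k, hb⟩⟩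
        · rw [Set.mul_singleton]
          refine ⟨f, ⟨hf, ?_⟩, rfl⟩
          rw [Set.singleton_mul]
          rintro ⟨f', hf', hff⟩
          apply hyX
          have hff' : a * b⁻¹ * f' = f := hff
          rw [hX, Set.mul_singleton]
          refine ⟨f', hf', ?_⟩
          change f' * h = b * g k
          have : f' = b * a⁻¹ * f := by rw [← hff']; group
          rw [this, mul_assoc, ← hax']; group)
    rw [hX] at core
    have hb := aux_bdry (Fs n) (hFs.1 n) K h
    have hA := ciInf_le (bdd_cnt (Fs n) (⋃ k, A k * ({g k} : Set G))) h
    change lowD _ _ ≤ cnt _ _ _ at hA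
    have hA' := mul_le_mul_of_nonneg_left hA hc0
    have hb' := mul_le_mul_of_nonneg_left hb hc0
    refine (sub_le_sub_right hA' _).trans ?_
    unfold cnt
    rw [le_div_iff₀ hcd, sub_mul, mul_assoc, div_mul_cancel₀ _ hcd.ne']
    linarith
  have herr : Tendsto (fun n => c * auxErr (Fs n) K) atTop (𝓝 0) := by
    simpa using (auxErr_tendsto Fs hFs K).const_mul c
  have bA : IsBoundedUnder (· ≤ ·) atTop
      (fun n => lowD (Fs n) (⋃ k, A k * ({g k} : Set G))) :=
    isBoundedUnder_of ⟨1, fun n => lowD_le_one' _ _⟩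
  have bA' : IsCoboundedUnder (· ≤ ·) atTop
      (fun n => lowD (Fs n) (⋃ k, A k * ({g k} : Set G))) :=
    (isBoundedUnder_of ⟨0, fun n => lowD_nonneg' _ _⟩ :
      IsBoundedUnder (· ≥ ·) atTop _).isCoboundedUnder_le
  have bB : IsBoundedUnder (· ≤ ·) atTop
      (fun n => lowD (Fs n) (⋃ k, B k * ({g k} : Set G))) :=
    isBoundedUnder_of ⟨1, fun n => lowD_le_one' _ _⟩
  have bB' : IsCoboundedUnder (· ≤ ·) atTop
      (fun n => lowD (Fs n) (⋃ k, B k * ({g k} : Set G))) :=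
    (isBoundedUnder_of ⟨0, fun n => lowD_nonneg' _ _⟩ :
      IsBoundedUnder (· ≥ ·) atTop _).isCoboundedUnder_le
  set LB := limsup (fun n => lowD (Fs n) (⋃ k, B k * ({g k} : Set G))) atTop with hLB
  rcases hc0.eq_or_lt with h0 | hpos
  · rw [← h0, mul_zero]
    exact le_limsup_of_frequently_le (Frequently.of_forall fun n => lowD_nonneg' _ _) bB
  · rw [← le_div_iff₀ hpos]
    apply le_of_forall_pos_le_add
    intro ε hε
    apply limsup_le_of_le bA'
    have hce : 0 < c * ε / 2 := by positivity
    have e1 := eventually_lt_of_limsup_lt (lt_add_of_pos_right LB hce) bB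
    have e2 := herr.eventually (gt_mem_nhds hce)
    filter_upwards [e1, e2] with n h1 h2
    have h3 := main n
    have : LB / c + ε = (LB + c * ε) / c := by field_simp
    rw [this, le_div_iff₀ hpos]
    linarith
end

section
/- Let a countable amenable group G act by homeomorphisms on a zero-dimensional compact metric space X. If the action admits weak comparison, then it admits comparison. -/
/-!
STATEMENT 4 (Lemma `compisweakcomp` of the paper):
For an action of a countable amenable group `G` on a zero-dimensional compact metric
space `X` by homeomorphisms, weak comparison implies comparison.
-/

open Filter Topology Pointwise MeasureTheory

/-- `A` is subequivalent to `B` (`A ≼ B`): there is a finite partition of `A` into clopen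
sets `A_1,…,A_k` and elements `g_1,…,g_k` of `G` such that `g_1 A_1, …, g_k A_k` are
pairwise disjoint subsets of `B`. -/
def Subequiv (G : Type*) [Group G] (X : Type*) [TopologicalSpace X] [MulAction G X]
    (A B : Set X) : Prop :=
  ∃ (k : ℕ) (Ai : Fin k → Set X) (g : Fin k → G),
    (∀ i, IsClopen (Ai i)) ∧ A = ⋃ i, Ai i ∧
    (Pairwise fun i j => Disjoint (Ai i) (Ai j)) ∧
    (∀ i, g i • Ai i ⊆ B) ∧
    (Pairwise fun i j => Disjoint (g i • Ai i) (g j • Ai j))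

/-- The action admits comparison: for clopen `A, B`, if `μ(A) < μ(B)` for every
`G`-invariant Borel probability measure `μ`, then `A ≼ B`. -/
def AdmitsComparison (G : Type*) [Group G] (X : Type*) [TopologicalSpace X]
    [MeasurableSpace X] [MulAction G X] : Prop :=
  ∀ A B : Set X, IsClopen A → IsClopen B →
    (∀ μ : Measure X, IsProbabilityMeasure μ → SMulInvariantMeasure G X μ → μ A < μ B) →
    Subequiv G X A B

/-- The action admits weak comparison: there is `C ≥ 1` such that for clopen `A, B`,
`sup_μ μ(A) < (1/C) · inf_μ μ(B)` (over `G`-invariant Borel probability measures)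
implies `A ≼ B`. -/
def AdmitsWeakComparison (G : Type*) [Group G] (X : Type*) [TopologicalSpace X]
    [MeasurableSpace X] [MulAction G X] : Prop :=
  ∃ C : ℝ, 1 ≤ C ∧ ∀ A B : Set X, IsClopen A → IsClopen B →
    (⨆ μ : {μ : Measure X // IsProbabilityMeasure μ ∧ SMulInvariantMeasure G X μ},
        (μ.1 A).toReal)
      < (1 / C) *
        (⨅ μ : {μ : Measure X // IsProbabilityMeasure μ ∧ SMulInvariantMeasure G X μ},
          (μ.1 B).toReal) →
    Subequiv G X A B


namespace Stmt4Aux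

open Set

variable {G : Type*} [Group G] {X : Type*} [TopologicalSpace X] [MulAction G X]

theorem isClopen_pre [ContinuousConstSMul G X] {S : Set X} (hS : IsClopen S) (g : G) :
    IsClopen ((fun x : X => g • x) ⁻¹' S) :=
  hS.preimage (continuous_const_smul g)

/-- one greedy step -/
theorem subequiv_step [ContinuousConstSMul G X] {R S : Set X} (hR : IsClopen R) (hS : IsClopen S)
    (g : G)
    (h : Subequiv G X (R \ (fun x : X => g • x) ⁻¹' S) (S \ (fun x : X => g⁻¹ • x) ⁻¹' R)) :
    Subequiv G X R S := by
  obtain ⟨k, Ai, gi, h1, h2, h3, h4, h5⟩ := h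
  have hsub : ∀ i, Ai i ⊆ R \ (fun x : X => g • x) ⁻¹' S := fun i => by
    rw [h2]; exact subset_iUnion _ i
  have e0 : g • (R ∩ (fun x : X => g • x) ⁻¹' S) ⊆ S ∩ (fun x : X => g⁻¹ • x) ⁻¹' R := by
    rintro _ ⟨x, ⟨hx, hx'⟩, rfl⟩
    refine ⟨hx', ?_⟩
    simpa using hx
  have d1 : ∀ i, Disjoint (R ∩ (fun x : X => g • x) ⁻¹' S) (Ai i) := fun i => by
    refine Set.disjoint_left.2 fun x hx hx' => (hsub i hx').2 hx.2
  have d2 : ∀ i, Disjoint (g • (R ∩ (fun x : X => g • x) ⁻¹' S)) (gi i • Ai i) := fun i => by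
    refine Set.disjoint_left.2 fun x hx hx' => (h4 i hx').2 (e0 hx).2
  refine ⟨k + 1, Fin.cons (R ∩ (fun x : X => g • x) ⁻¹' S) Ai, Fin.cons g gi, ?_, ?_, ?_, ?_, ?_⟩
  · intro i
    refine Fin.cases ?_ (fun i => ?_) i
    · simpa using hR.inter (isClopen_pre hS g)
    · simpa using h1 i
  · ext x
    have h2' : x ∈ R \ (fun x : X => g • x) ⁻¹' S ↔ ∃ i, x ∈ Ai i := by
      rw [h2]; simp
    simp only [mem_iUnion, Fin.exists_fin_succ, Fin.cons_zero, Fin.cons_succ, ← h2']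
    simp only [mem_inter_iff, Set.mem_sdiff]
    tauto
  · intro i j
    refine Fin.cases ?_ (fun i => ?_) i <;> refine Fin.cases ?_ (fun j => ?_) j
    · intro h; exact absurd rfl h
    · intro _; simpa using d1 j
    · intro _; simpa using (d1 i).symm
    · intro h; simpa using h3 (fun hh => h (by rw [hh]))
  · intro i
    refine Fin.cases ?_ (fun i => ?_) i
    · simpa using e0.trans inter_subset_left
    · simpa using (h4 i).trans sdiff_subset
  · intro i j
    refine Fin.cases ?_ (fun i => ?_) i <;> refine Fin.cases ?_ (fun j => ?_) j
    · intro h; exact absurd rfl h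
    · intro _; simpa using d2 j
    · intro _; simpa using (d2 i).symm
    · intro h; simpa using h5 (fun hh => h (by rw [hh]))

/-- The greedy sequence of remainders. -/
def rem (e : ℕ → G) (A B : Set X) : ℕ → Set X × Set X
  | 0 => (A, B)
  | n + 1 => ((rem e A B n).1 \ (fun x : X => e n • x) ⁻¹' (rem e A B n).2,
      (rem e A B n).2 \ (fun x : X => (e n)⁻¹ • x) ⁻¹' (rem e A B n).1)

theorem rem_clopen [ContinuousConstSMul G X] (e : ℕ → G) {A B : Set X} (hA : IsClopen A)
    (hB : IsClopen B) (n : ℕ) : IsClopen (rem e A B n).1 ∧ IsClopen (rem e A B n).2 := by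
  induction n with
  | zero => exact ⟨hA, hB⟩
  | succ n ih =>
    exact ⟨ih.1.diff (isClopen_pre ih.2 _), ih.2.diff (isClopen_pre ih.1 _)⟩

theorem rem_subequiv [ContinuousConstSMul G X] (e : ℕ → G) {A B : Set X} (hA : IsClopen A)
    (hB : IsClopen B) (n : ℕ) (h : Subequiv G X (rem e A B n).1 (rem e A B n).2) :
    Subequiv G X A B := by
  induction n with
  | zero => exact h
  | succ n ih =>
    exact ih (subequiv_step (rem_clopen e hA hB n).1 (rem_clopen e hA hB n).2 (e n) h)

theorem rem_anti (e : ℕ → G) (A B : Set X) :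
    Antitone (fun n => (rem e A B n).1) ∧ Antitone (fun n => (rem e A B n).2) :=
  ⟨antitone_nat_of_succ_le fun _ => sdiff_subset, antitone_nat_of_succ_le fun _ => sdiff_subset⟩

variable [MeasurableSpace X] [BorelSpace X]

theorem rem_measure [ContinuousConstSMul G X] (e : ℕ → G) {A B : Set X} (hA : IsClopen A)
    (hB : IsClopen B) (μ : Measure X) [IsProbabilityMeasure μ] [SMulInvariantMeasure G X μ]
    (n : ℕ) : μ.real (rem e A B n).2 + μ.real A = μ.real (rem e A B n).1 + μ.real B := by
  induction n with
  | zero => simp only [rem]; ring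
  | succ n ih =>
    obtain ⟨c1, c2⟩ := rem_clopen e hA hB n
    set R := (rem e A B n).1
    set S := (rem e A B n).2
    have m1 := measureReal_sdiff_add_inter (μ := μ) (s := R)
      (isClopen_pre c2 (e n)).isOpen.measurableSet
    have m2 := measureReal_sdiff_add_inter (μ := μ) (s := S)
      (isClopen_pre c1 (e n)⁻¹).isOpen.measurableSet
    have m3 : μ.real (R ∩ (fun x : X => e n • x) ⁻¹' S)
        = μ.real (S ∩ (fun x : X => (e n)⁻¹ • x) ⁻¹' R) := by
      have := SMulInvariantMeasure.measure_preimage_smul (μ := μ) (e n)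
        (c2.inter (isClopen_pre c1 (e n)⁻¹)).isOpen.measurableSet
      rw [measureReal_def, measureReal_def, ← this]
      congr 2
      ext x
      simp [and_comm]
    change μ.real (S \ _) + _ = μ.real (R \ _) + _
    linarith

theorem rem_null [ContinuousConstSMul G X] [Countable G] (e : ℕ → G)
    (he : Function.Surjective e) {A B : Set X}
    (hA : IsClopen A) (hB : IsClopen B)
    (hAB : ∀ μ : Measure X, IsProbabilityMeasure μ → SMulInvariantMeasure G X μ → μ A < μ B)
    (μ : Measure X) [IsProbabilityMeasure μ] [SMulInvariantMeasure G X μ] :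
    μ (⋂ n, (rem e A B n).1) = 0 := by
  have mR : MeasurableSet (⋂ n, (rem e A B n).1) :=
    MeasurableSet.iInter fun n => (rem_clopen e hA hB n).1.isOpen.measurableSet
  set Y : Set X := ⋃ g : G, (fun x : X => g • x) ⁻¹' (⋂ n, (rem e A B n).1) with hY
  have mY : MeasurableSet Y := MeasurableSet.iUnion fun g => mR.preimage
    (continuous_const_smul g).measurable
  have hsub : (⋂ n, (rem e A B n).1) ⊆ Y := fun x hx => mem_iUnion.2 ⟨1, by simpa using hx⟩
  have hYinv : ∀ (g : G), (fun x : X => g • x) ⁻¹' Y = Y := by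
    intro g
    ext x
    simp only [hY, mem_preimage, mem_iUnion, ← mul_smul]
    constructor
    · rintro ⟨h, hh⟩; exact ⟨h * g, hh⟩
    · rintro ⟨h, hh⟩; exact ⟨h * g⁻¹, by simpa using hh⟩
  by_contra hne
  have hY0 : μ Y ≠ 0 := fun h => hne (measure_mono_null hsub h)
  have p : IsProbabilityMeasure (ProbabilityTheory.cond μ Y) :=
    ProbabilityTheory.cond_isProbabilityMeasure hY0
  have inv : SMulInvariantMeasure G X (ProbabilityTheory.cond μ Y) := by
    refine ⟨fun g s hs => ?_⟩
    rw [ProbabilityTheory.cond_apply mY, ProbabilityTheory.cond_apply mY]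
    congr 1
    rw [← SMulInvariantMeasure.measure_preimage_smul (μ := μ) g (mY.inter hs), preimage_inter,
      hYinv]
  set ν := ProbabilityTheory.cond μ Y
  have hlt := hAB ν p inv
  have hlt' : ν.real A < ν.real B :=
    (ENNReal.toReal_lt_toReal (measure_ne_top _ _) (measure_ne_top _ _)).2 hlt
  have hB0 : ν (⋂ n, (rem e A B n).2) = 0 := by
    rw [ProbabilityTheory.cond_apply mY]
    have : Y ∩ (⋂ n, (rem e A B n).2) = ∅ := by
      ext x
      simp only [mem_inter_iff, mem_empty_iff_false, iff_false, not_and]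
      intro hx hx'
      obtain ⟨g, hg⟩ := mem_iUnion.1 hx
      obtain ⟨n, hn⟩ := he g⁻¹
      have h1 := mem_iInter.1 hg (n + 1)
      apply h1.2
      simp only [mem_preimage, hn, inv_smul_smul]
      exact mem_iInter.1 hx' n
    simp [this]
  have ht : Tendsto (fun n => ν (rem e A B n).2) atTop (𝓝 (ν (⋂ n, (rem e A B n).2))) :=
    tendsto_measure_iInter_atTop
      (fun n => (rem_clopen e hA hB n).2.isOpen.measurableSet.nullMeasurableSet) (rem_anti e A B).2
      ⟨0, measure_ne_top _ _⟩
  rw [hB0] at ht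
  have ht' : Tendsto (fun n => ν.real (rem e A B n).2) atTop (𝓝 0) := by
    have := (ENNReal.tendsto_toReal ENNReal.zero_ne_top).comp ht
    rw [ENNReal.toReal_zero] at this
    exact this
  obtain ⟨n, hn⟩ := (ht'.eventually (gt_mem_nhds (sub_pos.2 hlt'))).exists
  have := rem_measure e hA hB ν n
  have h0 : 0 ≤ ν.real (rem e A B n).1 := measureReal_nonneg
  linarith

section top
variable [CompactSpace X] [TopologicalSpace.MetrizableSpace X] [TotallyDisconnectedSpace X]

theorem cont_eval {A : Set X} (hA : IsClopen A) :
    Continuous (fun μ : ProbabilityMeasure X => (μ : Measure X).real A) := by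
  have : Continuous (fun μ : ProbabilityMeasure X => μ A) := by
    letI := TopologicalSpace.metrizableSpaceMetric X
    exact continuous_iff_continuousAt.2 fun μ =>
      ProbabilityMeasure.tendsto_measure_of_isClopen_of_tendsto tendsto_id hA
  exact NNReal.continuous_coe.comp this

theorem inv_of_clopen [ContinuousConstSMul G X] (μ : Measure X) [IsProbabilityMeasure μ]
    (h : ∀ (g : G) (s : Set X), IsClopen s → μ.real s ≤ μ.real ((fun x : X => g • x) ⁻¹' s)) :
    SMulInvariantMeasure G X μ := by
  letI := TopologicalSpace.metrizableSpaceMetric X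
  have heq : ∀ (g : G) (s : Set X), IsClopen s →
      μ ((fun x : X => g • x) ⁻¹' s) = μ s := by
    intro g s hs
    have h1 := h g s hs
    have h2 := h g⁻¹ _ (isClopen_pre hs g)
    have : (fun x : X => g⁻¹ • x) ⁻¹' ((fun x : X => g • x) ⁻¹' s) = s := by
      ext x; simp
    rw [this] at h2
    exact (ENNReal.toReal_eq_toReal_iff' (measure_ne_top _ _) (measure_ne_top _ _)).1
      (le_antisymm h2 h1)
  refine ⟨fun g s hs => ?_⟩
  have mg : Measurable (fun x : X => g • x) := (continuous_const_smul g).measurable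
  have : μ.map (fun x : X => g • x) = μ := by
    have := Measure.isProbabilityMeasure_map (μ := μ) mg.aemeasurable
    refine ext_of_generate_finite {s : Set X | IsClopen s} ?_ ?_ ?_ (by simp)
    · rw [BorelSpace.measurable_eq (α := X)]
      exact TopologicalSpace.IsTopologicalBasis.borel_eq_generateFrom
        isTopologicalBasis_isClopen
    · intro s hs t ht _; exact IsClopen.inter hs ht
    · intro s hs
      rw [Measure.map_apply mg hs.isOpen.measurableSet]
      exact heq g s hs
  conv_rhs => rw [← this]
  rw [Measure.map_apply mg hs]

open Classical in
/-- empirical measure -/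
noncomputable def emp (F : Finset G) (x : X) : Measure X :=
  (F.card : ENNReal)⁻¹ • ∑ g ∈ F, Measure.dirac (g • x)

open Classical in
theorem emp_real (F : Finset G) (x : X) {s : Set X} (hs : MeasurableSet s) :
    (emp F x).real s = ((F.filter (fun g => g • x ∈ s)).card : ℝ) / F.card := by
  rw [measureReal_def, emp, Measure.smul_apply, Measure.finsetSum_apply]
  simp only [Measure.dirac_apply' _ hs, Set.indicator_apply, Pi.one_apply, smul_eq_mul,
    Finset.sum_boole, ENNReal.toReal_mul, ENNReal.toReal_inv, ENNReal.toReal_natCast]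
  rw [div_eq_inv_mul]

theorem emp_prob {F : Finset G} (hF : F.Nonempty) (x : X) : IsProbabilityMeasure (emp F x) := by
  refine ⟨?_⟩
  have : (F.card : ENNReal) ≠ 0 := by simpa using hF.ne_empty
  simp [emp, ENNReal.inv_mul_cancel this]

open Classical in
theorem emp_ineq [ContinuousConstSMul G X] {F : Finset G} (hF : F.Nonempty) (x : X) (h : G)
    {s : Set X} (hs : IsClopen s) :
    (emp F x).real s + (((({h} : Set G) * (F : Set G)) ∩ (F : Set G)).ncard : ℝ) / F.card - 1 ≤
      (emp F x).real ((fun x : X => h • x) ⁻¹' s) := by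
  rw [emp_real F x hs.isOpen.measurableSet, emp_real F x (isClopen_pre hs h).isOpen.measurableSet]
  have hc : (0 : ℝ) < F.card := by exact_mod_cast hF.card_pos
  have e1 : (({h} : Set G) * (F : Set G)) ∩ (F : Set G)
      = ((F.image (fun g => h * g) ∩ F : Finset G) : Set G) := by
    ext y; simp [Set.mem_mul]
  rw [e1, Set.ncard_coe_finset]
  have key : (F.filter (fun g => g • x ∈ s)).card + (F.image (fun g => h * g) ∩ F).card
      ≤ (F.filter (fun g => g • x ∈ (fun x : X => h • x) ⁻¹' s)).card + F.card := by
    rw [← Finset.card_union_add_card_inter]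
    rw [add_comm]
    refine add_le_add ?_ (Finset.card_le_card ?_)
    · rw [← Finset.card_image_of_injective
        (F.filter (fun g => g • x ∈ (fun x : X => h • x) ⁻¹' s)) (mul_right_injective h)]
      refine Finset.card_le_card ?_
      intro y hy
      simp only [Finset.mem_inter, Finset.mem_filter, Finset.mem_image] at hy
      obtain ⟨⟨_, hy2⟩, ⟨g, hg, rfl⟩, _⟩ := hy
      simp only [Finset.mem_image, Finset.mem_filter, mem_preimage]
      exact ⟨g, ⟨hg, by rwa [← mul_smul]⟩, rfl⟩
    · intro y hy
      simp only [Finset.mem_union, Finset.mem_inter, Finset.mem_filter] at hy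
      tauto
  have key' : ((F.filter (fun g => g • x ∈ s)).card : ℝ) + (F.image (fun g => h * g) ∩ F).card
      ≤ (F.filter (fun g => g • x ∈ (fun x : X => h • x) ⁻¹' s)).card + F.card := by
    exact_mod_cast key
  rw [← add_div, sub_le_iff_le_add, ← sub_le_iff_le_add, div_sub_one hc.ne']
  exact div_le_div_of_nonneg_right (by linarith) hc.le

theorem exists_inv [ContinuousConstSMul G X] [Nonempty X]
    (hAmen : ∃ Fs : ℕ → Finset G, IsFolner Fs) :
    ∃ μ : ProbabilityMeasure X, SMulInvariantMeasure G X (μ : Measure X) := by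
  obtain ⟨F, hF, hT⟩ := hAmen
  obtain ⟨x⟩ := ‹Nonempty X›
  let ν : ℕ → ProbabilityMeasure X := fun n => ⟨emp (F n) x, emp_prob (hF n) x⟩
  obtain ⟨μ, -, hμ⟩ := isCompact_univ.ultrafilter_le_nhds ((hyperfilter ℕ).map ν) (by simp)
  have hν : Tendsto ν (hyperfilter ℕ : Filter ℕ) (𝓝 μ) := hμ
  refine ⟨μ, inv_of_clopen _ fun g s hs => ?_⟩
  have t1 := ((cont_eval hs).tendsto μ).comp hν
  have t2 := ((cont_eval (isClopen_pre hs g)).tendsto μ).comp hν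
  have t3 := ((t1.add ((hT g).mono_left Nat.hyperfilter_le_atTop)).sub_const 1)
  have := le_of_tendsto_of_tendsto' t3 t2 fun n => emp_ineq (hF n) x g hs
  linarith

theorem isClosed_inv [ContinuousConstSMul G X] :
    IsClosed {μ : ProbabilityMeasure X | SMulInvariantMeasure G X (μ : Measure X)} := by
  have : {μ : ProbabilityMeasure X | SMulInvariantMeasure G X (μ : Measure X)} =
      ⋂ (g : G) (s : Set X) (_ : IsClopen s), {μ : ProbabilityMeasure X |
        (μ : Measure X).real s ≤ (μ : Measure X).real ((fun x : X => g • x) ⁻¹' s)} := by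
    ext μ
    simp only [mem_ofPred_eq, mem_iInter]
    constructor
    · intro h g s hs
      rw [measureReal_def, measureReal_def,
        SMulInvariantMeasure.measure_preimage_smul g hs.isOpen.measurableSet]
    · exact fun h => inv_of_clopen _ h
  rw [this]
  exact isClosed_iInter fun g => isClosed_iInter fun s => isClosed_iInter fun hs =>
    isClosed_le (cont_eval hs) (cont_eval (isClopen_pre hs g))

end top

end Stmt4Aux

theorem stmt4 (G : Type*) [Group G] [Countable G]
    (X : Type*) [TopologicalSpace X] [CompactSpace X] [TopologicalSpace.MetrizableSpace X]
    [TotallyDisconnectedSpace X] [MeasurableSpace X] [BorelSpace X]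
    [MulAction G X] [ContinuousConstSMul G X]
    (hAmen : ∃ Fs : ℕ → Finset G, IsFolner Fs)
    (hweak : AdmitsWeakComparison G X) :
    AdmitsComparison G X := by
  intro A B hA hB hAB
  rcases isEmpty_or_nonempty X with hX | hX
  · exact ⟨0, Fin.elim0, Fin.elim0, fun i => i.elim0, by ext x; exact hX.elim x,
      fun i => i.elim0, fun i => i.elim0, fun i => i.elim0⟩
  obtain ⟨C, hC, hw⟩ := hweak
  obtain ⟨e, he⟩ := exists_surjective_nat G
  set K := {μ : ProbabilityMeasure X | SMulInvariantMeasure G X (μ : Measure X)} with hK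
  have cK : IsCompact K := Stmt4Aux.isClosed_inv.isCompact
  have nK : K.Nonempty := Stmt4Aux.exists_inv hAmen
  obtain ⟨μ₀, h₀, hmin⟩ := cK.exists_isMinOn nK
    ((Stmt4Aux.cont_eval hB).sub (Stmt4Aux.cont_eval hA)).continuousOn
  set ε := (μ₀ : Measure X).real B - (μ₀ : Measure X).real A with hε
  have εpos : 0 < ε := sub_pos.2 ((ENNReal.toReal_lt_toReal (measure_ne_top _ _)
    (measure_ne_top _ _)).2 (hAB μ₀ inferInstance h₀))
  have hC0 : 0 < C := by linarith
  have hδ : 0 < ε / (2 * C) := by positivity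
  obtain ⟨N, hN⟩ := cK.elim_directed_cover
    (fun n : ℕ => {μ : ProbabilityMeasure X |
      (μ : Measure X).real (Stmt4Aux.rem e A B n).1 < ε / (2 * C)})
    (fun n => isOpen_lt (Stmt4Aux.cont_eval (Stmt4Aux.rem_clopen e hA hB n).1) continuous_const)
    (by
      intro μ hμ
      have : SMulInvariantMeasure G X (μ : Measure X) := hμ
      have ht : Tendsto (fun n => (μ : Measure X) (Stmt4Aux.rem e A B n).1) atTop
          (𝓝 ((μ : Measure X) (⋂ n, (Stmt4Aux.rem e A B n).1))) :=
        tendsto_measure_iInter_atTop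
          (fun n => (Stmt4Aux.rem_clopen e hA hB n).1.isOpen.measurableSet.nullMeasurableSet)
          (Stmt4Aux.rem_anti e A B).1 ⟨0, measure_ne_top _ _⟩
      rw [Stmt4Aux.rem_null e he hA hB hAB] at ht
      have ht' := (ENNReal.tendsto_toReal ENNReal.zero_ne_top).comp ht
      rw [ENNReal.toReal_zero] at ht'
      obtain ⟨n, hn⟩ := (ht'.eventually (gt_mem_nhds hδ)).exists
      exact Set.mem_iUnion.2 ⟨n, hn⟩)
    (directed_of_isDirected_le fun m n hmn μ hμ =>
      (measureReal_mono ((Stmt4Aux.rem_anti e A B).1 hmn)).trans_lt hμ)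
  refine Stmt4Aux.rem_subequiv e hA hB N (hw _ _ (Stmt4Aux.rem_clopen e hA hB N).1
    (Stmt4Aux.rem_clopen e hA hB N).2 ?_)
  have : Nonempty {μ : Measure X // IsProbabilityMeasure μ ∧ SMulInvariantMeasure G X μ} :=
    ⟨⟨μ₀, inferInstance, h₀⟩⟩
  have hsup : (⨆ μ : {μ : Measure X // IsProbabilityMeasure μ ∧ SMulInvariantMeasure G X μ},
        (μ.1 (Stmt4Aux.rem e A B N).1).toReal) ≤ ε / (2 * C) :=
    ciSup_le fun μ => by
      have h1 : (⟨μ.1, μ.2.1⟩ : ProbabilityMeasure X) ∈ K := μ.2.2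
      exact (hN h1).le
  have hinf : ε ≤ (⨅ μ : {μ : Measure X // IsProbabilityMeasure μ ∧ SMulInvariantMeasure G X μ},
        (μ.1 (Stmt4Aux.rem e A B N).2).toReal) :=
    le_ciInf fun μ => by
      have h1 : (⟨μ.1, μ.2.1⟩ : ProbabilityMeasure X) ∈ K := μ.2.2
      have h2 : ε ≤ μ.1.real B - μ.1.real A := hmin h1
      have := μ.2.1
      have := μ.2.2
      have h3 := Stmt4Aux.rem_measure e hA hB μ.1 N
      have h4 : 0 ≤ μ.1.real (Stmt4Aux.rem e A B N).1 := measureReal_nonneg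
      change ε ≤ μ.1.real (Stmt4Aux.rem e A B N).2
      linarith
  refine hsup.trans_lt (lt_of_lt_of_le ?_ (mul_le_mul_of_nonneg_left hinf (by positivity)))
  have : ε / (2 * C) = (1 / C * ε) / 2 := by field_simp
  rw [this]
  exact half_lt_self (by positivity)
end

section
/- Every finite group G has the comparison property: for any action of G by homeomorphisms on a zero-dimensional compact metric space X and any clopen sets A, B ⊆ X such that μ(A) < μ(B) for every G-invariant Borel probability measure μ on X, one has A ≼ B. -/
/-!
STATEMENT 5 (Remark `finitecomp` of the paper):
Every finite group has the comparison property: for any action of a finite group `G` by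
homeomorphisms on a zero-dimensional compact metric space `X` and any clopen `A, B ⊆ X`
with `μ(A) < μ(B)` for every `G`-invariant Borel probability measure `μ`, one has `A ≼ B`.
-/

open Pointwise MeasureTheory

theorem greedy_aux (G : Type*) [Group G] (X : Type*) [TopologicalSpace X] [MulAction G X]
    [ContinuousConstSMul G X] (n : ℕ) : ∀ (e : Fin n → G) (A B : Set X), IsClopen A → IsClopen B →
    ∃ P : Fin n → Set X, (∀ i, IsClopen (P i)) ∧ (∀ i, P i ⊆ A) ∧
      (Pairwise fun i j => Disjoint (P i) (P j)) ∧
      (∀ i, e i • P i ⊆ B) ∧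
      (Pairwise fun i j => Disjoint (e i • P i) (e j • P j)) ∧
      (∀ x ∈ A, (∀ j, x ∉ P j) → ∀ i, e i • x ∈ B → ∃ j, e i • x ∈ e j • P j) := by
  induction n with
  | zero =>
    intro e A B hA hB
    exact ⟨fun i => i.elim0, fun i => i.elim0, fun i => i.elim0, fun i => i.elim0,
      fun i => i.elim0, fun i => i.elim0, fun _ _ _ i => i.elim0⟩
  | succ n ih =>
    intro e A B hA hB
    have hsm : ∀ (g : G) (S : Set X), IsClopen S → IsClopen (g • S) := fun g S hS =>
      ⟨hS.1.smul g, hS.2.smul g⟩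
    have hA0 : IsClopen (A ∩ (e 0)⁻¹ • B) := hA.inter (hsm _ _ hB)
    have h0B : e 0 • (A ∩ (e 0)⁻¹ • B) ⊆ B := by
      rintro _ ⟨x, ⟨_, hx⟩, rfl⟩
      rw [Set.mem_inv_smul_set_iff] at hx
      exact hx
    obtain ⟨P, h1, h2, h3, h4, h5, h6⟩ := ih (fun i => e i.succ) (A \ (A ∩ (e 0)⁻¹ • B))
      (B \ (e 0 • (A ∩ (e 0)⁻¹ • B))) (hA.diff hA0) (hB.diff (hsm _ _ hA0))
    have d1 : ∀ i, Disjoint (A ∩ (e 0)⁻¹ • B) (P i) := fun i =>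
      Set.disjoint_left.2 fun x hx hx' => (h2 i hx').2 hx
    have d2 : ∀ i, Disjoint (e 0 • (A ∩ (e 0)⁻¹ • B)) (e i.succ • P i) := fun i =>
      Set.disjoint_left.2 fun x hx hx' => (h4 i hx').2 hx
    refine ⟨Fin.cons (A ∩ (e 0)⁻¹ • B) P, ?_, ?_, ?_, ?_, ?_, ?_⟩
    · intro i
      refine Fin.cases ?_ (fun i => ?_) i
      · simpa using hA0
      · simpa using h1 i
    · intro i
      refine Fin.cases ?_ (fun i => ?_) i
      · simp
      · simpa using (h2 i).trans Set.diff_subset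
    · intro i j
      refine Fin.cases ?_ (fun i => ?_) i <;> refine Fin.cases ?_ (fun j => ?_) j
      · simp
      · intro _; simpa only [Fin.cons_zero, Fin.cons_succ] using d1 j
      · intro _; simpa only [Fin.cons_zero, Fin.cons_succ] using (d1 i).symm
      · intro hij
        simpa only [Fin.cons_zero, Fin.cons_succ] using h3 (fun h => hij (congrArg Fin.succ h))
    · intro i
      refine Fin.cases ?_ (fun i => ?_) i
      · simpa only [Fin.cons_zero] using h0B
      · simpa only [Fin.cons_succ] using (h4 i).trans Set.diff_subset
    · intro i j
      refine Fin.cases ?_ (fun i => ?_) i <;> refine Fin.cases ?_ (fun j => ?_) j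
      · simp
      · intro _; simpa only [Fin.cons_zero, Fin.cons_succ] using d2 j
      · intro _; simpa only [Fin.cons_zero, Fin.cons_succ] using (d2 i).symm
      · intro hij
        simpa only [Fin.cons_zero, Fin.cons_succ] using h5 (fun h => hij (congrArg Fin.succ h))
    · intro x hx hxP i hi
      have hx0 : x ∉ A ∩ (e 0)⁻¹ • B := by simpa only [Fin.cons_zero] using hxP 0
      have hxs : ∀ j, x ∉ P j := fun j => by simpa only [Fin.cons_succ] using hxP j.succ
      revert hi
      refine Fin.cases ?_ (fun i => ?_) i
      · intro hi
        exact (hx0 ⟨hx, Set.mem_inv_smul_set_iff.2 hi⟩).elim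
      · intro hi
        by_cases hc : e i.succ • x ∈ e 0 • (A ∩ (e 0)⁻¹ • B)
        · exact ⟨0, by simpa only [Fin.cons_zero] using hc⟩
        · obtain ⟨j, hj⟩ := h6 x ⟨hx, hx0⟩ hxs i ⟨hi, hc⟩
          exact ⟨j.succ, by simpa only [Fin.cons_succ] using hj⟩

theorem orbit_measure_aux (G : Type*) [Group G] [Finite G] (X : Type*) [TopologicalSpace X]
    [MeasurableSpace X] [BorelSpace X] [MulAction G X] [ContinuousConstSMul G X] (x : X) :
    ∃ μ : Measure X, IsProbabilityMeasure μ ∧ SMulInvariantMeasure G X μ ∧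
      ∀ S : Set X, MeasurableSet S → (∀ g : G, g • x ∉ S) → μ S = 0 := by
  classical
  have := Fintype.ofFinite G
  refine ⟨(Fintype.card G : ENNReal)⁻¹ • ∑ g : G, Measure.dirac (g • x), ⟨?_⟩, ⟨?_⟩, ?_⟩
  · simp [ENNReal.inv_mul_cancel]
  · intro c s hs
    have hs' : MeasurableSet ((fun y => c • y) ⁻¹' s) :=
      hs.preimage (continuous_const_smul c).measurable
    simp only [Measure.smul_apply, Measure.finsetSum_apply, Measure.dirac_apply' _ hs,
      Measure.dirac_apply' _ hs']
    congr 1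
    refine Fintype.sum_equiv (Equiv.mulLeft c) _ _ fun g => ?_
    simp [Set.indicator, mul_smul]
  · intro S hS hg
    simp [Measure.dirac_apply' _ hS, hg]

theorem stmt5 (G : Type*) [Group G] [Finite G]
    (X : Type*) [TopologicalSpace X] [CompactSpace X] [TopologicalSpace.MetrizableSpace X]
    [TotallyDisconnectedSpace X] [MeasurableSpace X] [BorelSpace X]
    [MulAction G X] [ContinuousConstSMul G X]
    (A B : Set X) (hA : IsClopen A) (hB : IsClopen B)
    (h : ∀ μ : Measure X, IsProbabilityMeasure μ → SMulInvariantMeasure G X μ → μ A < μ B) :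
    Subequiv G X A B := by
  classical
  obtain ⟨n, ⟨e⟩⟩ := Finite.exists_equiv_fin G
  obtain ⟨P, h1, h2, h3, h4, h5, h6⟩ := greedy_aux G X n e.symm A B hA hB
  refine ⟨n, P, e.symm, h1, ?_, h3, h4, h5⟩
  refine Set.Subset.antisymm ?_ (Set.iUnion_subset h2)
  intro x hx
  by_contra hxP
  simp only [Set.mem_iUnion, not_exists] at hxP
  obtain ⟨μ, hμ, hinv, hz⟩ := orbit_measure_aux G X x
  have hm : ∀ i, MeasurableSet (P i) := fun i => (h1 i).1.measurableSet
  have hm' : ∀ i, MeasurableSet (e.symm i • P i) := fun i => ((h1 i).1.smul _).measurableSet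
  have hB' : μ (B \ ⋃ i, e.symm i • P i) = 0 := by
    refine hz _ (hB.1.measurableSet.diff (MeasurableSet.iUnion hm')) ?_
    rintro g ⟨hg, hg'⟩
    apply hg'
    obtain ⟨j, hj⟩ := h6 x hx hxP (e g) (by simpa using hg)
    exact Set.mem_iUnion.2 ⟨j, by simpa using hj⟩
  refine absurd (h μ hμ hinv) (not_lt.2 ?_)
  calc μ B ≤ μ (⋃ i, e.symm i • P i) := by
        have := measure_le_inter_add_diff μ B (⋃ i, e.symm i • P i)
        rw [hB', add_zero] at this
        exact this.trans (measure_mono Set.inter_subset_right)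
    _ = μ (⋃ i, P i) := by
        rw [measure_iUnion h5 hm', measure_iUnion h3 hm]
        simp only [measure_smul]
    _ ≤ μ A := measure_mono (Set.iUnion_subset h2)
end

section
/- Let G be a countable amenable group and let A, B ⊆ G be disjoint. In the subshift Y^{AB} associated with A, B, one has inf_{μ∈M^{AB}} μ([2]) = D(B), sup_{μ∈M^{AB}} μ([2]) = D̄(B), and inf_{μ∈M^{AB}} (μ([2]) − μ([1])) = D(B,A), where M^{AB} is the set of shift-invariant Borel probability measures on Y^{AB}. -/
/-!
STATEMENT 8 (Proposition `prop` (2) of the paper):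
For disjoint `A, B ⊆ G`, in the subshift `Y^{AB}` associated with `A, B` one has
`inf_μ μ([2]) = D(B)`, `sup_μ μ([2]) = D̄(B)` and `inf_μ (μ([2]) − μ([1])) = D(B,A)`,
where `μ` ranges over the shift-invariant Borel probability measures concentrated on
`Y^{AB}`, and `D, D̄` are the Banach densities along a Følner sequence.
-/

open Filter Topology Pointwise MeasureTheory
open scoped Classical

/-- The shift action of `G` on `Λ^G`: `(h(x))_g = x_{gh}`. -/
def shiftMap {G : Type*} [Group G] {Λ : Type*} (h : G) (x : G → Λ) : G → Λ :=
  fun g => x (g * h)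

/-- The point `y^{AB} ∈ {0,1,2}^G` determined by disjoint sets `A, B ⊆ G`. -/
noncomputable def yab {G : Type*} [Group G] (A B : Set G) : G → Fin 3 :=
  fun g => if g ∈ A then 1 else if g ∈ B then 2 else 0

/-- The subshift `Y^{AB}`: the closure of the shift-orbit of `y^{AB}`. -/
noncomputable def Yab {G : Type*} [Group G] (A B : Set G) : Set (G → Fin 3) :=
  closure (Set.range fun h : G => shiftMap h (yab A B))

namespace S8

lemma cont_shift {G : Type*} [Group G] (h : G) :
    Continuous (shiftMap h : (G → Fin 3) → (G → Fin 3)) := by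
  unfold shiftMap; fun_prop

lemma shift_shift {G : Type*} [Group G] (h f : G) (y : G → Fin 3) :
    shiftMap h (shiftMap f y) = shiftMap (h * f) y := by
  funext g; simp [shiftMap, mul_assoc]

noncomputable def emp {G : Type*} [Group G] (F : Finset G) (y : G → Fin 3) :
    Measure (G → Fin 3) :=
  (F.card : ENNReal)⁻¹ • ∑ f ∈ F, Measure.dirac (shiftMap f y)

lemma emp_apply {G : Type*} [Group G] (F : Finset G) (hF : F.Nonempty) (y : G → Fin 3)
    (s : Set (G → Fin 3)) (hs : MeasurableSet s) (h : ∀ f, shiftMap f y ∈ s) :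
    emp F y s = 1 := by
  have hc : (F.card : ENNReal) ≠ 0 := by simpa using hF.ne_empty
  simp [emp, Measure.finsetSum_apply, Measure.dirac_apply' _ hs, h]
  exact ENNReal.inv_mul_cancel hc (by simp)

lemma emp_prob {G : Type*} [Group G] (F : Finset G) (hF : F.Nonempty) (y : G → Fin 3) :
    IsProbabilityMeasure (emp F y) :=
  ⟨emp_apply F hF y _ MeasurableSet.univ (by simp)⟩

lemma emp_int {G : Type*} [Group G] [Countable G] (F : Finset G) (y : G → Fin 3)
    (φ : (G → Fin 3) → ℝ) (hφ : Continuous φ) :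
    ∫ x, φ x ∂(emp F y) = (∑ f ∈ F, φ (shiftMap f y)) / F.card := by
  unfold emp
  rw [integral_smul_measure, integral_finsetSum_measure]
  · simp [integral_dirac' _ _ hφ.stronglyMeasurable, div_eq_inv_mul]
  · intro i _
    exact integrable_dirac' hφ.stronglyMeasurable (by simp)

lemma sum_diff {G : Type*} [Group G] (F : Finset G) (h : G) (ψ : G → ℝ) (C : ℝ)
    (hC : ∀ g, |ψ g| ≤ C) :
    |∑ f ∈ F, ψ (h * f) - ∑ f ∈ F, ψ f| ≤
      2 * C * (F.card - ((({h} : Set G) * (F : Set G)) ∩ (F : Set G)).ncard) := by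
  classical
  set H := F.image (h * ·) with hH
  have hinj : Function.Injective (h * · : G → G) := mul_right_injective h
  have e1 : ∑ f ∈ F, ψ (h * f) = ∑ f ∈ H, ψ f := by
    rw [hH, Finset.sum_image (fun a _ b _ hab => hinj hab)]
  have hcard : H.card = F.card := Finset.card_image_of_injective _ hinj
  have e2 : ((({h} : Set G) * (F : Set G)) ∩ (F : Set G)).ncard = (H ∩ F).card := by
    rw [← Set.ncard_coe_finset]; congr 1; ext x; simp [hH]
  have sp (S T : Finset G) : ∑ x ∈ S ∩ T, ψ x + ∑ x ∈ S \ T, ψ x = ∑ x ∈ S, ψ x := by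
    rw [← Finset.sum_union (by
      rw [Finset.disjoint_left]; intro x hx; simp_all)]
    congr 1; ext x; simp; tauto
  have a1 := sp H F
  have a2 := sp F H
  have c1 := Finset.card_inter_add_card_sdiff H F
  have c2 := Finset.card_inter_add_card_sdiff F H
  rw [Finset.inter_comm F H] at a2 c2
  have b (S : Finset G) : |∑ f ∈ S, ψ f| ≤ S.card * C := by
    refine (Finset.abs_sum_le_sum_abs _ _).trans ?_
    simpa using Finset.sum_le_card_nsmul S _ C (fun x _ => hC x)
  have b1 := b (H \ F)
  have b2 := b (F \ H)
  have c1' : ((H ∩ F).card : ℝ) + (H \ F).card = F.card := by rw [← hcard]; exact_mod_cast c1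
  have c2' : ((H ∩ F).card : ℝ) + (F \ H).card = F.card := by exact_mod_cast c2
  rw [e1, e2, ← a1, ← a2]
  have h1 : ((H \ F).card : ℝ) = F.card - (H ∩ F).card := by linarith
  have h2 : ((F \ H).card : ℝ) = F.card - (H ∩ F).card := by linarith
  rw [h1] at b1; rw [h2] at b2
  rw [abs_le] at *
  constructor <;> linarith

lemma avg_bdd {G : Type*} [Group G] (F : Finset G) (hF : F.Nonempty) (ψ : G → ℝ) (C : ℝ)
    (hC : ∀ g, |ψ g| ≤ C) : |(∑ f ∈ F, ψ f) / F.card| ≤ C := by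
  have hc : (0 : ℝ) < F.card := by exact_mod_cast hF.card_pos
  rw [abs_div, abs_of_pos hc, div_le_iff₀ hc, mul_comm]
  refine (Finset.abs_sum_le_sum_abs _ _).trans ?_
  simpa using Finset.sum_le_card_nsmul F _ C (fun x _ => hC x)

lemma cont_w {G : Type*} [Group G] (w : Fin 3 → ℝ) (f : G) :
    Continuous (fun y : G → Fin 3 => w (y f)) :=
  (continuous_of_discreteTopology (f := w)).comp (continuous_apply f)

theorem key {G : Type*} [Group G] [Countable G]
    (Fs : ℕ → Finset G) (hFs : IsFolner Fs) (A B : Set G) (w : Fin 3 → ℝ) :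
    (⨅ μ : {μ : Measure (G → Fin 3) // IsProbabilityMeasure μ ∧ μ (Yab A B) = 1 ∧
        ∀ h : G, μ.map (shiftMap h) = μ}, ∫ y, w (y 1) ∂μ.1)
      = limsup (fun n => ⨅ g : G, (∑ f ∈ Fs n, w (yab A B (f * g))) / (Fs n).card) atTop := by
  obtain ⟨hne, hfol⟩ := hFs
  obtain ⟨C, hC⟩ : ∃ C, ∀ i, |w i| ≤ C :=
    ⟨∑ j, |w j|, fun i => Finset.single_le_sum (f := fun j => |w j|) (fun _ _ => abs_nonneg _)
      (Finset.mem_univ i)⟩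
  set a : ℕ → ℝ := fun n => ⨅ g : G, (∑ f ∈ Fs n, w (yab A B (f * g))) / (Fs n).card with ha
  have hcl : IsClosed (Yab A B) := isClosed_closure
  have hbd : ∀ n, BddBelow (Set.range fun g : G =>
      (∑ f ∈ Fs n, w (yab A B (f * g))) / ((Fs n).card : ℝ)) := by
    intro n
    refine ⟨-C, ?_⟩
    rintro _ ⟨g, rfl⟩
    exact (abs_le.1 (avg_bdd (Fs n) (hne n) (fun f => w (yab A B (f * g))) C
      (fun _ => hC _))).1
  have haC : ∀ n, -C ≤ a n ∧ a n ≤ C := by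
    intro n
    constructor
    · exact le_ciInf fun g => (abs_le.1 (avg_bdd (Fs n) (hne n)
        (fun f => w (yab A B (f * g))) C (fun _ => hC _))).1
    · exact (ciInf_le (hbd n) 1).trans (abs_le.1 (avg_bdd (Fs n) (hne n)
        (fun f => w (yab A B (f * 1))) C (fun _ => hC _))).2
  have hub : IsBoundedUnder (· ≤ ·) atTop a := isBoundedUnder_of ⟨C, fun n => (haC n).2⟩
  have hlb : IsBoundedUnder (· ≥ ·) atTop a := isBoundedUnder_of ⟨-C, fun n => (haC n).1⟩
  -- lower bound
  have low : ∀ μ : {μ : Measure (G → Fin 3) // IsProbabilityMeasure μ ∧ μ (Yab A B) = 1 ∧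
        ∀ h : G, μ.map (shiftMap h) = μ}, ∀ n, a n ≤ ∫ y, w (y 1) ∂μ.1 := by
    rintro ⟨μ, hp, hY, hinv⟩ n
    have hc : (0 : ℝ) < (Fs n).card := by exact_mod_cast (hne n).card_pos
    have hint : ∀ f : G, Integrable (fun y : G → Fin 3 => w (y f)) μ := fun f =>
      Integrable.of_bound (cont_w w f).aestronglyMeasurable C (ae_of_all _ fun y => hC _)
    have e : ∀ f : G, ∫ y, w (y f) ∂μ = ∫ y, w (y 1) ∂μ := by
      intro f
      conv_rhs => rw [← hinv f]
      rw [integral_map (cont_shift f).measurable.aemeasurable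
        (cont_w w 1).aestronglyMeasurable]
      simp [shiftMap]
    have e2 : ∫ y, (∑ f ∈ Fs n, w (y f)) / (Fs n).card ∂μ = ∫ y, w (y 1) ∂μ := by
      rw [integral_div, integral_finsetSum _ (fun f _ => hint f)]
      simp only [e, Finset.sum_const, nsmul_eq_mul]
      field_simp
    have hmem : ∀ᵐ y ∂μ, y ∈ Yab A B := by
      exact mem_ae_iff.2 ((prob_compl_eq_zero_iff hcl.measurableSet).2 hY)
    have hpt : ∀ y ∈ Yab A B, a n ≤ (∑ f ∈ Fs n, w (y f)) / (Fs n).card := by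
      have hclosed : IsClosed {y : G → Fin 3 | a n ≤ (∑ f ∈ Fs n, w (y f)) / (Fs n).card} := by
        refine isClosed_le continuous_const ?_
        exact (continuous_finsetSum _ fun f _ => cont_w w f).div_const _
      intro y hy
      refine closure_minimal ?_ hclosed hy
      rintro _ ⟨g, rfl⟩
      exact ciInf_le (hbd n) g
    show a n ≤ ∫ y, w (y 1) ∂μ
    rw [← e2]
    have : a n = ∫ _y, a n ∂μ := by simp
    rw [this]
    refine integral_mono_ae (integrable_const _)
      ((integrable_finsetSum _ fun f _ => hint f).div_const _) ?_
    filter_upwards [hmem] with y hy using hpt y hy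
  -- near minimizers
  have hg : ∀ n : ℕ, ∃ g : G, (∑ f ∈ Fs n, w (yab A B (f * g))) / ((Fs n).card : ℝ)
      < a n + 1 / ((n : ℝ) + 1) := fun n =>
    exists_lt_of_ciInf_lt (lt_add_of_pos_right _ (by positivity))
  choose g hg using hg
  let ν : ℕ → ProbabilityMeasure (G → Fin 3) := fun n =>
    ⟨emp (Fs n) (shiftMap (g n) (yab A B)), emp_prob _ (hne n) _⟩
  let U : Ultrafilter ℕ := hyperfilter ℕ
  have hU : (U : Filter ℕ) ≤ atTop := by
    rw [← Nat.cofinite_eq_atTop]; exact hyperfilter_le_cofinite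
  obtain ⟨μ, -, hμ⟩ := isCompact_univ.ultrafilter_le_nhds (U.map ν) (by simp)
  have hT : Tendsto ν U (𝓝 μ) := hμ
  have : TopologicalSpace.MetrizableSpace (G → Fin 3) :=
    TopologicalSpace.metrizableSpace_of_t3_secondCountable _
  have hTi := ProbabilityMeasure.tendsto_iff_forall_integral_tendsto.1 hT
  have hνi : ∀ (φ : (G → Fin 3) → ℝ), Continuous φ → ∀ n, ∫ x, φ x ∂(ν n : Measure (G → Fin 3))
      = (∑ f ∈ Fs n, φ (shiftMap f (shiftMap (g n) (yab A B)))) / (Fs n).card :=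
    fun φ hφ n => emp_int _ _ φ hφ
  have hprob : IsProbabilityMeasure (μ : Measure (G → Fin 3)) := inferInstance
  have hY : (μ : Measure (G → Fin 3)) (Yab A B) = 1 := by
    refine le_antisymm prob_le_one ?_
    have := ProbabilityMeasure.limsup_measure_closed_le_of_tendsto hT hcl
    refine le_trans ?_ this
    have h1 : ∀ n, (ν n : Measure (G → Fin 3)) (Yab A B) = 1 := fun n =>
      emp_apply _ (hne n) _ _ hcl.measurableSet (fun f => by
        rw [shift_shift]; exact subset_closure ⟨_, rfl⟩)
    simp [h1]
  have hinv : ∀ h : G, (μ : Measure (G → Fin 3)).map (shiftMap h) = μ := by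
    intro h
    have : IsProbabilityMeasure ((μ : Measure (G → Fin 3)).map (shiftMap h)) :=
      Measure.isProbabilityMeasure_map (cont_shift h).measurable.aemeasurable
    refine ext_of_forall_integral_eq_of_IsFiniteMeasure fun φ => ?_
    rw [integral_map (cont_shift h).measurable.aemeasurable φ.continuous.aestronglyMeasurable]
    let φ' := φ.compContinuous ⟨shiftMap h, cont_shift h⟩
    have t1 := hTi φ
    have t2 := hTi φ'
    have t3 := t2.sub t1
    have t4 : Tendsto (fun n => ∫ x, φ' x ∂(ν n : Measure (G → Fin 3))
        - ∫ x, φ x ∂(ν n : Measure (G → Fin 3))) U (𝓝 0) := by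
      have hf := ((hfol h).const_sub 1).const_mul (2 * ‖φ‖)
      rw [sub_self, mul_zero] at hf
      refine squeeze_zero_norm (fun n => ?_) (hf.mono_left hU)
      have hc : (0 : ℝ) < (Fs n).card := by exact_mod_cast (hne n).card_pos
      rw [hνi φ' φ'.continuous, hνi φ φ.continuous, ← sub_div, Real.norm_eq_abs, abs_div,
        abs_of_pos hc, div_le_iff₀ hc]
      have := sum_diff (Fs n) h
        (fun f => φ (shiftMap f (shiftMap (g n) (yab A B)))) ‖φ‖ (fun _ => φ.norm_coe_le_norm _)
      have e : ∀ f, φ' (shiftMap f (shiftMap (g n) (yab A B))) =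
          φ (shiftMap (h * f) (shiftMap (g n) (yab A B))) := by
        intro f
        rw [← shift_shift h f]; rfl
      simp only [e]
      refine this.trans (le_of_eq ?_)
      field_simp
    have := tendsto_nhds_unique t3 t4
    exact sub_eq_zero.1 this
  let M : {μ : Measure (G → Fin 3) // IsProbabilityMeasure μ ∧ μ (Yab A B) = 1 ∧
        ∀ h : G, μ.map (shiftMap h) = μ} := ⟨μ, hprob, hY, hinv⟩
  have : Nonempty {μ : Measure (G → Fin 3) // IsProbabilityMeasure μ ∧ μ (Yab A B) = 1 ∧
        ∀ h : G, μ.map (shiftMap h) = μ} := ⟨M⟩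
  have hL : ∫ y, w (y 1) ∂(μ : Measure (G → Fin 3)) ≤ limsup a atTop := by
    let φ : BoundedContinuousFunction (G → Fin 3) ℝ :=
      BoundedContinuousFunction.mkOfCompact ⟨fun y => w (y 1), cont_w w 1⟩
    have t1 : Tendsto (fun n => ∫ y, w (y 1) ∂(ν n : Measure (G → Fin 3))) U
      (𝓝 (∫ y, w (y 1) ∂(μ : Measure (G → Fin 3)))) := hTi φ
    refine le_of_forall_pos_le_add fun ε hε => ?_
    refine le_of_tendsto t1 ?_
    have h1 : ∀ᶠ n in atTop, a n < limsup a atTop + ε / 2 :=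
      eventually_lt_of_limsup_lt (by linarith) hub
    have h2 : ∀ᶠ n : ℕ in atTop, 1 / ((n : ℝ) + 1) < ε / 2 :=
      tendsto_one_div_add_atTop_nhds_zero_nat.eventually_lt_const (by linarith)
    refine hU ?_
    filter_upwards [h1, h2] with n h1 h2
    rw [hνi _ (cont_w w 1)]
    have := hg n
    simp only [shiftMap, one_mul]
    linarith
  apply le_antisymm
  · exact (ciInf_le ⟨-C, by
      rintro _ ⟨μ, rfl⟩
      exact (haC 0).1.trans (low μ 0)⟩ M).trans hL
  · refine le_ciInf fun μ => ?_
    exact limsup_le_of_le hlb.isCoboundedUnder_le (Eventually.of_forall (low μ))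

lemma cnt_eq {G : Type*} [Group G] (F : Finset G) (A S : Set G) (B : Set G) (g : G) (i : Fin 3)
    (h : ∀ x, yab A B x = i ↔ x ∈ S) :
    cnt F S g = (∑ f ∈ F, if yab A B (f * g) = i then (1 : ℝ) else 0) / F.card := by
  classical
  unfold cnt
  congr 1
  rw [Finset.sum_boole]
  norm_cast
  rw [← Finset.card_image_of_injective _ (mul_left_injective g), ← Set.ncard_coe_finset]
  congr 1
  ext x
  simp only [h, Set.mul_singleton, Set.mem_inter_iff, Set.mem_image, Finset.coe_image,
    Finset.coe_filter, Finset.mem_coe, Set.mem_ofPred_eq]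
  constructor
  · rintro ⟨h1, f, hf, rfl⟩; exact ⟨f, ⟨hf, h1⟩, rfl⟩
  · rintro ⟨f, ⟨hf, h1⟩, rfl⟩; exact ⟨h1, f, hf, rfl⟩

lemma meas_eq {G : Type*} [Group G] [Countable G] (Y : Set (G → Fin 3)) (hcl : IsClosed Y)
    (μ : Measure (G → Fin 3)) (hp : IsProbabilityMeasure μ) (hY : μ Y = 1) (i : Fin 3) :
    (μ ({y : G → Fin 3 | y 1 = i} ∩ Y)).toReal = ∫ y, (if y 1 = i then (1 : ℝ) else 0) ∂μ := by
  have hmem : Y =ᵐ[μ] Set.univ := by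
    rw [ae_eq_univ, prob_compl_eq_zero_iff hcl.measurableSet]; exact hY
  have hm : MeasurableSet {y : G → Fin 3 | y 1 = i} :=
    (measurableSet_singleton i).preimage (measurable_pi_apply 1)
  have h1 : μ ({y : G → Fin 3 | y 1 = i} ∩ Y) = μ {y : G → Fin 3 | y 1 = i} := by
    rw [measure_congr ((ae_eq_refl _).inter hmem), Set.inter_univ]
  rw [h1, ← measureReal_def, ← integral_indicator_one hm]
  congr 1
  funext y
  simp [Set.indicator_apply]

lemma iSup_eq {ι : Type*} (f : ι → ℝ) : (⨆ i, f i) = -⨅ i, -f i := by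
  rw [iInf, iSup, ← Real.sSup_neg]
  congr 1; ext x; simp [neg_eq_iff_eq_neg]

lemma liminf_eq (u : ℕ → ℝ) : liminf u atTop = - limsup (fun n => -u n) atTop := by
  rw [Filter.liminf_eq, Filter.limsup_eq, ← Real.sSup_neg]
  congr 1; ext x; simp

end S8

theorem stmt8 {G : Type*} [Group G] [Countable G]
    (Fs : ℕ → Finset G) (hFs : IsFolner Fs)
    (A B : Set G) (hAB : Disjoint A B) :
    ((⨅ μ : {μ : Measure (G → Fin 3) // IsProbabilityMeasure μ ∧ μ (Yab A B) = 1 ∧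
        ∀ h : G, μ.map (shiftMap h) = μ},
        (μ.1 ({y : G → Fin 3 | y 1 = 2} ∩ Yab A B)).toReal)
      = limsup (fun n => lowD (Fs n) B) atTop) ∧
    ((⨆ μ : {μ : Measure (G → Fin 3) // IsProbabilityMeasure μ ∧ μ (Yab A B) = 1 ∧
        ∀ h : G, μ.map (shiftMap h) = μ},
        (μ.1 ({y : G → Fin 3 | y 1 = 2} ∩ Yab A B)).toReal)
      = liminf (fun n => uppD (Fs n) B) atTop) ∧
    ((⨅ μ : {μ : Measure (G → Fin 3) // IsProbabilityMeasure μ ∧ μ (Yab A B) = 1 ∧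
        ∀ h : G, μ.map (shiftMap h) = μ},
        ((μ.1 ({y : G → Fin 3 | y 1 = 2} ∩ Yab A B)).toReal
          - (μ.1 ({y : G → Fin 3 | y 1 = 1} ∩ Yab A B)).toReal))
      = limsup (fun n => advD (Fs n) B A) atTop) := by
  have hp1 : ∀ x, yab A B x = 1 ↔ x ∈ A := by
    intro x; unfold yab; split_ifs <;> simp_all
  have hp2 : ∀ x, yab A B x = 2 ↔ x ∈ B := by
    intro x
    have : x ∈ A → x ∉ B := fun h => Set.disjoint_left.1 hAB h
    unfold yab; split_ifs <;> simp_all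
  have hcl : IsClosed (Yab A B) := isClosed_closure
  have m : ∀ (μ : {μ : Measure (G → Fin 3) // IsProbabilityMeasure μ ∧ μ (Yab A B) = 1 ∧
        ∀ h : G, μ.map (shiftMap h) = μ}) (i : Fin 3),
      (μ.1 ({y : G → Fin 3 | y 1 = i} ∩ Yab A B)).toReal
        = ∫ y, (if y 1 = i then (1 : ℝ) else 0) ∂μ.1 := fun μ i =>
    S8.meas_eq _ hcl _ μ.2.1 μ.2.2.1 i
  have c1 := fun F g => S8.cnt_eq F A A B g 1 hp1
  have c2 := fun F g => S8.cnt_eq F A B B g 2 hp2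
  refine ⟨?_, ?_, ?_⟩
  · simp only [m, lowD, c2]
    exact S8.key Fs hFs A B (fun i => if i = 2 then (1 : ℝ) else 0)
  · rw [S8.iSup_eq, S8.liminf_eq]
    simp only [m, uppD, c2, S8.iSup_eq, neg_neg]
    have := S8.key Fs hFs A B (fun i => -(if i = 2 then (1 : ℝ) else 0))
    simp only [integral_neg, Finset.sum_neg_distrib, neg_div] at this
    rw [this]
  · simp only [m, advD, c1, c2]
    have := S8.key Fs hFs A B
      (fun i => (if i = 2 then (1 : ℝ) else 0) - (if i = 1 then (1 : ℝ) else 0))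
    simp only [Finset.sum_sub_distrib, sub_div] at this
    rw [← this]
    congr 1
    funext μ
    have := μ.2.1
    have hi : ∀ i : Fin 3, Integrable (fun y : G → Fin 3 => if y 1 = i then (1 : ℝ) else 0) μ.1 :=
      fun i => Integrable.of_bound
        (S8.cont_w (fun j => if j = i then (1 : ℝ) else 0) 1).aestronglyMeasurable 1
        (ae_of_all _ fun y => by split_ifs <;> simp)
    exact (integral_sub (hi 2) (hi 1)).symm
end

section
/- Let G be a countable group, let X ⊆ Λ^G be a subshift over a finite alphabet Λ, and let A, B ⊆ X be disjoint clopen sets. Then A ≼ B if and only if there exists a family of functions φ̃_x : G → G (x ∈ X) determined by a block code such that, for every x ∈ X, the restriction of φ̃_x to A_x = {g ∈ G : g(x) ∈ A} is an injection into B_x = {g ∈ G : g(x) ∈ B}. -/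
/-!
STATEMENT 9 (Theorem `tutka` (1) of the paper):
For a subshift `X ⊆ Λ^G` over a finite alphabet and disjoint (relatively) clopen
`A, B ⊆ X`: `A ≼ B` iff there exists a family of functions `φ̃_x : G → G` (`x ∈ X`)
determined by a block code such that for each `x ∈ X` the restriction of `φ̃_x` to
`A_x = {g : g(x) ∈ A}` is an injection into `B_x = {g : g(x) ∈ B}`.
-/

open Pointwise

/-- `A` is a relatively clopen subset of the subshift `Xs`. -/
def RelClopen {G Λ : Type*} [Group G] [TopologicalSpace Λ] (Xs A : Set (G → Λ)) : Prop :=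
  A ⊆ Xs ∧ IsClopen ((Subtype.val ⁻¹' A) : Set Xs)

/-- Subequivalence `A ≼ B` inside the subshift `Xs`: a finite partition of `A` into
relatively clopen sets, shifted by elements of `G` to pairwise disjoint subsets of `B`. -/
def SubshiftSubequiv {G Λ : Type*} [Group G] [TopologicalSpace Λ]
    (Xs A B : Set (G → Λ)) : Prop :=
  ∃ (k : ℕ) (Ai : Fin k → Set (G → Λ)) (g : Fin k → G),
    (∀ i, RelClopen Xs (Ai i)) ∧ A = ⋃ i, Ai i ∧
    (Pairwise fun i j => Disjoint (Ai i) (Ai j)) ∧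
    (∀ i, shiftMap (g i) '' Ai i ⊆ B) ∧
    (Pairwise fun i j => Disjoint (shiftMap (g i) '' Ai i) (shiftMap (g j) '' Ai j))

/-- The family `{φ̃_x}_{x ∈ X'}` of maps `G → G` is determined by a block code:
there are a finite coding horizon `F ⊆ G`, a finite set `E ⊆ G` and a map
`Ξ : Λ^F → E` such that `φ̃_x(a) = Ξ((a(x))|_F) · a` for all `x ∈ X'`, `a ∈ G`. -/
def DetByCode {G Λ : Type*} [Group G] (X' : Set (G → Λ))
    (φt : (G → Λ) → G → G) : Prop :=
  ∃ (F E : Finset G) (Ξ : (↥(F : Set G) → Λ) → G),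
    (∀ b, Ξ b ∈ E) ∧
    ∀ x ∈ X', ∀ a : G, φt x a = Ξ (fun f => shiftMap a x f.1) * a

lemma open_local {G Λ : Type*} [TopologicalSpace Λ] (Xs A : Set (G → Λ))
    (h : IsOpen ((Subtype.val ⁻¹' A) : Set Xs)) (x : G → Λ) (hx : x ∈ Xs) (hxA : x ∈ A) :
    ∃ F : Finset G, ∀ y ∈ Xs, (∀ f ∈ F, y f = x f) → y ∈ A := by
  obtain ⟨O, hO, hOA⟩ := isOpen_induced_iff.1 h
  have hxO : x ∈ O := by
    have : (⟨x, hx⟩ : Xs) ∈ (Subtype.val ⁻¹' O : Set Xs) := by rw [hOA]; exact hxA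
    exact this
  obtain ⟨I, u, hu, hsub⟩ := isOpen_pi_iff.1 hO x hxO
  refine ⟨I, fun y hy hyx => ?_⟩
  have hyO : y ∈ O := hsub (fun f hf => by rw [hyx f hf]; exact (hu f hf).2)
  have : (⟨y, hy⟩ : Xs) ∈ (Subtype.val ⁻¹' A : Set Xs) := by rw [← hOA]; exact hyO
  exact this

lemma clopen_window {G Λ : Type*} [Group G] [Fintype Λ] [TopologicalSpace Λ]
    [DiscreteTopology Λ] (Xs A : Set (G → Λ)) (hc : IsClosed Xs) (h : RelClopen Xs A) :
    ∃ F : Finset G, ∀ y ∈ Xs, ∀ z ∈ Xs, (∀ f ∈ F, y f = z f) → y ∈ A → z ∈ A := by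
  classical
  have loc : ∀ x : G → Λ, ∃ F : Finset G, x ∈ Xs →
      ∀ y ∈ Xs, (∀ f ∈ F, y f = x f) → (y ∈ A ↔ x ∈ A) := by
    intro x
    by_cases hx : x ∈ Xs
    swap
    · exact ⟨∅, fun h => absurd h hx⟩
    by_cases hxA : x ∈ A
    · obtain ⟨F, hF⟩ := open_local Xs A h.2.2 x hx hxA
      exact ⟨F, fun _ y hy e => iff_of_true (hF y hy e) hxA⟩
    · obtain ⟨F, hF⟩ := open_local Xs Aᶜ h.2.1.isOpen_compl x hx hxA
      exact ⟨F, fun _ y hy e => iff_of_false (hF y hy e) hxA⟩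
  choose F hF using loc
  have hK : IsCompact Xs := hc.isCompact
  obtain ⟨t, ht⟩ := hK.elim_finite_subcover
    (fun x : Xs => {y : G → Λ | ∀ f ∈ F x.1, y f = x.1 f})
    (fun x => by
      have : {y : G → Λ | ∀ f ∈ F x.1, y f = x.1 f} =
          (↑(F x.1) : Set G).pi (fun f => {x.1 f}) := by
        ext y; simp [Set.mem_pi]
      rw [this]
      exact isOpen_set_pi (Finset.finite_toSet _) (fun _ _ => isOpen_discrete _))
    (fun x hx => Set.mem_iUnion.2 ⟨⟨x, hx⟩, fun _ _ => rfl⟩)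
  refine ⟨t.biUnion (fun x => F x.1), fun y hy z hz hyz hyA => ?_⟩
  obtain ⟨x, hxt, hyx⟩ := Set.mem_iUnion₂.1 (ht hy)
  have hzx : ∀ f ∈ F x.1, z f = x.1 f := fun f hf => by
    rw [← hyz f (Finset.mem_biUnion.2 ⟨x, hxt, hf⟩)]; exact hyx f hf
  exact (hF x.1 x.2 z hz hzx).2 ((hF x.1 x.2 y hy hyx).1 hyA)

lemma shiftMap_mul {G Λ : Type*} [Group G] (g h : G) (x : G → Λ) :
    shiftMap (g * h) x = shiftMap g (shiftMap h x) := by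
  funext k; simp [shiftMap, mul_assoc]

lemma shiftMap_one' {G Λ : Type*} [Group G] (x : G → Λ) : shiftMap 1 x = x := by
  funext k; simp [shiftMap]

theorem stmt9 {G Λ : Type*} [Group G] [Countable G] [Fintype Λ]
    [TopologicalSpace Λ] [DiscreteTopology Λ]
    (Xs : Set (G → Λ)) (hne : Xs.Nonempty) (hclosed : IsClosed Xs)
    (hinv : ∀ h : G, ∀ x ∈ Xs, shiftMap h x ∈ Xs)
    (A B : Set (G → Λ)) (hA : RelClopen Xs A) (hB : RelClopen Xs B)
    (hAB : Disjoint A B) :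
    SubshiftSubequiv Xs A B ↔
      ∃ φt : (G → Λ) → G → G, DetByCode Xs φt ∧
        ∀ x ∈ Xs,
          Set.MapsTo (φt x) {g : G | shiftMap g x ∈ A} {g : G | shiftMap g x ∈ B} ∧
          Set.InjOn (φt x) {g : G | shiftMap g x ∈ A} := by
  classical
  constructor
  · rintro ⟨k, Ai, g, hcl, hAU, hdis, hsub, hdis2⟩
    choose F hF using fun i => clopen_window Xs (Ai i) hclosed (hcl i)
    let F' : Finset G := Finset.univ.biUnion F
    let P : (↥(F' : Set G) → Λ) → Fin k → Prop :=
      fun b i => ∃ y ∈ Ai i, (fun f : ↥(F' : Set G) => y f.1) = b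
    let Ξ : (↥(F' : Set G) → Λ) → G := fun b =>
      if h : ∃ i, P b i then g h.choose else 1
    have key : ∀ x ∈ Xs, ∀ i, x ∈ Ai i → Ξ (fun f => x f.1) = g i := by
      intro x hx i hxi
      have h : ∃ i, P (fun f => x f.1) i := ⟨i, x, hxi, rfl⟩
      have e : Ξ (fun f => x f.1) = g h.choose := dif_pos h
      obtain ⟨y, hy, hyx⟩ := h.choose_spec
      have hxj : x ∈ Ai h.choose := hF h.choose y ((hcl _).1 hy) x hx (fun f hf =>
        congrFun hyx ⟨f, Finset.mem_coe.2 (Finset.mem_biUnion.2 ⟨_, Finset.mem_univ _, hf⟩)⟩) hy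
      rw [e]
      by_contra hne'
      exact Set.disjoint_left.1 (hdis (fun q => hne' (congrArg g q))) hxj hxi
    refine ⟨fun x a => Ξ (fun f => shiftMap a x f.1) * a,
      ⟨F', insert 1 (Finset.univ.image g), Ξ, ?_, fun _ _ _ => rfl⟩, ?_⟩
    · intro b
      by_cases h : ∃ i, P b i
      · have e : Ξ b = g h.choose := dif_pos h
        rw [e]; simp
      · have e : Ξ b = 1 := dif_neg h
        rw [e]; simp
    · intro x hx
      constructor
      · intro a ha
        have ha' : shiftMap a x ∈ A := ha
        rw [hAU] at ha'
        obtain ⟨i, hi⟩ := Set.mem_iUnion.1 ha'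
        show shiftMap (Ξ (fun f => shiftMap a x f.1) * a) x ∈ B
        rw [key _ (hinv a x hx) i hi, shiftMap_mul]
        exact hsub i ⟨_, hi, rfl⟩
      · intro a ha b hb hab
        have ha' : shiftMap a x ∈ A := ha
        have hb' : shiftMap b x ∈ A := hb
        rw [hAU] at ha' hb'
        obtain ⟨i, hi⟩ := Set.mem_iUnion.1 ha'
        obtain ⟨j, hj⟩ := Set.mem_iUnion.1 hb'
        have hab' : Ξ (fun f => shiftMap a x f.1) * a = Ξ (fun f => shiftMap b x f.1) * b := hab
        rw [key _ (hinv a x hx) i hi, key _ (hinv b x hx) j hj] at hab'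
        by_cases hij : i = j
        · subst hij
          exact mul_left_cancel hab'
        · exfalso
          refine Set.disjoint_left.1 (hdis2 hij) ⟨_, hi, rfl⟩ ⟨_, hj, ?_⟩
          rw [← shiftMap_mul, ← shiftMap_mul, hab']
  · rintro ⟨φt, ⟨F, E, Ξ, hE, hφ⟩, hmain⟩
    let e : Fin E.card ≃ E := E.equivFin.symm
    let r : (G → Λ) → (↥(F : Set G) → Λ) := fun x f => x f.1
    have hr : Continuous r := continuous_pi fun f => continuous_apply f.1
    refine ⟨E.card, fun i => {x | x ∈ A ∧ Ξ (r x) = (e i).1}, fun i => (e i).1,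
      ?_, ?_, ?_, ?_, ?_⟩
    · intro i
      refine ⟨fun x hx => hA.1 hx.1, ?_⟩
      have h2 : IsClopen (r ⁻¹' {b | Ξ b = (e i).1}) := (isClopen_discrete _).preimage hr
      exact hA.2.inter (h2.preimage continuous_subtype_val)
    · ext x
      simp only [Set.mem_iUnion, Set.mem_ofPred_eq]
      constructor
      · intro hx
        exact ⟨e.symm ⟨_, hE (r x)⟩, hx, by simp⟩
      · rintro ⟨_, hx, _⟩
        exact hx
    · intro i j hij
      refine Set.disjoint_left.2 fun x hx hy => hij (e.injective (Subtype.ext ?_))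
      exact hx.2.symm.trans hy.2
    · rintro i _ ⟨x, ⟨hxA, hx⟩, rfl⟩
      have h := (hmain x (hA.1 hxA)).1 (x := 1) (by simpa [shiftMap_one'] using hxA)
      rw [hφ x (hA.1 hxA), shiftMap_one', mul_one] at h
      have h' : shiftMap (Ξ (r x)) x ∈ B := h
      rwa [hx] at h'
    · intro i j hij
      refine Set.disjoint_left.2 ?_
      rintro _ ⟨x, ⟨hxA, hx⟩, rfl⟩ ⟨y, ⟨hyA, hy⟩, hyx⟩
      have hX := hA.1 hxA
      have hyx' : shiftMap (((e j).1)⁻¹ * (e i).1) x = y := by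
        rw [shiftMap_mul]
        have : shiftMap (e j).1 y = shiftMap (e i).1 x := hyx
        rw [← this, ← shiftMap_mul, inv_mul_cancel, shiftMap_one']
      have h1 : φt x 1 = (e i).1 := by
        rw [hφ x hX, shiftMap_one', mul_one]; exact hx
      have h2 : φt x (((e j).1)⁻¹ * (e i).1) = (e i).1 := by
        rw [hφ x hX, hyx']
        have : Ξ (fun f => y f.1) = (e j).1 := hy
        rw [this]; simp
      have h3 : (1 : G) = ((e j).1)⁻¹ * (e i).1 := (hmain x hX).2
        (by simpa [shiftMap_one'] using hxA)
        (by show shiftMap _ x ∈ A; rw [hyx']; exact hyA) (h1.trans h2.symm)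
      exact hij (e.injective (Subtype.ext (inv_mul_eq_one.1 h3.symm).symm))
end

section
/- Let G be a countable group, let X ⊆ Λ^G be a subshift over a finite alphabet Λ which is transitive with transitive point x* (i.e. the shift-orbit of x* is dense in X), and let A, B ⊆ X be disjoint clopen sets. Then A ≼ B if and only if there exists a single function φ̃_{x*} : G → G determined by a block code whose restriction to A_{x*} = {g ∈ G : g(x*) ∈ A} is an injection into B_{x*} = {g ∈ G : g(x*) ∈ B}. -/
/-!
STATEMENT 10 (Theorem `tutka` (2) of the paper):
For a transitive subshift `X ⊆ Λ^G` with transitive point `x*` and disjoint (relatively)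
clopen `A, B ⊆ X`: `A ≼ B` iff there exists a single function `φ̃ : G → G` determined by
a block code (evaluated along `x*`) whose restriction to `A_{x*}` is an injection into
`B_{x*}`.
-/

open Pointwise

theorem shift_shift_aux {G Λ : Type*} [Group G] (g h : G) (x : G → Λ) :
    shiftMap g (shiftMap h x) = shiftMap (g * h) x := by
  funext a
  simp [shiftMap, mul_assoc]

theorem shift_cont_aux {G Λ : Type*} [Group G] [TopologicalSpace Λ] (g : G) :
    Continuous (shiftMap g : (G → Λ) → (G → Λ)) := by
  unfold shiftMap
  fun_prop

theorem open_of_relClopen_aux {G Λ : Type*} [Group G] [TopologicalSpace Λ]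
    {Xs A : Set (G → Λ)} (hA : RelClopen Xs A) :
    ∃ U : Set (G → Λ), IsOpen U ∧ ∀ x ∈ Xs, (x ∈ U ↔ x ∈ A) := by
  obtain ⟨U, hU, h⟩ := isOpen_induced_iff.1 hA.2.isOpen
  refine ⟨U, hU, fun x hx => ?_⟩
  have := Set.ext_iff.1 h ⟨x, hx⟩
  simpa using this

theorem coopen_of_relClopen_aux {G Λ : Type*} [Group G] [TopologicalSpace Λ]
    {Xs A : Set (G → Λ)} (hA : RelClopen Xs A) :
    ∃ U : Set (G → Λ), IsOpen U ∧ ∀ x ∈ Xs, (x ∈ U ↔ x ∉ A) := by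
  obtain ⟨U, hU, h⟩ := isOpen_induced_iff.1 hA.2.compl.isOpen
  refine ⟨U, hU, fun x hx => ?_⟩
  have := Set.ext_iff.1 h ⟨x, hx⟩
  simpa using this

theorem window_aux {G Λ : Type*} [Group G] [Fintype Λ]
    [TopologicalSpace Λ] [DiscreteTopology Λ]
    {Xs A : Set (G → Λ)} (hclosed : IsClosed Xs) (hA : RelClopen Xs A) :
    ∃ F : Finset G, ∀ x ∈ A, ∀ y ∈ Xs, (∀ f ∈ F, x f = y f) → y ∈ A := by
  classical
  obtain ⟨U, hU, h⟩ := open_of_relClopen_aux hA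
  have hAc : IsCompact A := by
    have h1 : IsClosed (Subtype.val '' (Subtype.val ⁻¹' A : Set Xs)) :=
      hclosed.isClosedEmbedding_subtypeVal.isClosedMap _ hA.2.isClosed
    rw [Subtype.image_preimage_coe, Set.inter_eq_right.2 hA.1] at h1
    exact h1.isCompact
  have key : ∀ z : G → Λ, ∃ I : Finset G, z ∈ A →
      ∀ y, (∀ f ∈ I, z f = y f) → y ∈ U := by
    intro z
    by_cases hz : z ∈ A
    · obtain ⟨I, u, h1, h2⟩ := isOpen_pi_iff.1 hU z ((h z (hA.1 hz)).2 hz)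
      refine ⟨I, fun _ y hy => h2 fun f hf => ?_⟩
      rw [← hy f hf]
      exact (h1 f hf).2
    · exact ⟨∅, fun h => absurd h hz⟩
  choose I hI using key
  obtain ⟨t, ht, hcov⟩ := hAc.elim_nhds_subcover
    (fun z => (I z : Set G).pi fun f => {z f}) (fun z _ =>
      (isOpen_set_pi (I z).finite_toSet fun _ _ => isOpen_discrete _).mem_nhds
        (fun f _ => rfl))
  refine ⟨t.biUnion I, fun x hx y hy hxy => ?_⟩
  obtain ⟨z, hz, hxz⟩ := Set.mem_iUnion₂.1 (hcov hx)
  refine (h y hy).1 (hI z (ht z hz) y fun f hf => ?_)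
  rw [← hxy f (Finset.mem_biUnion.2 ⟨z, hz, hf⟩)]
  exact (hxz f hf).symm

theorem stmt10 {G Λ : Type*} [Group G] [Countable G] [Fintype Λ]
    [TopologicalSpace Λ] [DiscreteTopology Λ]
    (Xs : Set (G → Λ)) (hclosed : IsClosed Xs)
    (hinv : ∀ h : G, ∀ x ∈ Xs, shiftMap h x ∈ Xs)
    (xstar : G → Λ) (hxstar : xstar ∈ Xs)
    (htrans : closure (Set.range fun h : G => shiftMap h xstar) = Xs)
    (A B : Set (G → Λ)) (hA : RelClopen Xs A) (hB : RelClopen Xs B)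
    (hAB : Disjoint A B) :
    SubshiftSubequiv Xs A B ↔
      ∃ φt : G → G,
        (∃ (F E : Finset G) (Ξ : (↥(F : Set G) → Λ) → G),
          (∀ b, Ξ b ∈ E) ∧
          ∀ a : G, φt a = Ξ (fun f => shiftMap a xstar f.1) * a) ∧
        Set.MapsTo φt {g : G | shiftMap g xstar ∈ A} {g : G | shiftMap g xstar ∈ B} ∧
        Set.InjOn φt {g : G | shiftMap g xstar ∈ A} := by
  classical
  have dense : ∀ U : Set (G → Λ), IsOpen U → ∀ x ∈ Xs, x ∈ U →
      ∃ h : G, shiftMap h xstar ∈ U := by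
    intro U hU x hx hxU
    rw [← htrans] at hx
    obtain ⟨_, h1, h, rfl⟩ := mem_closure_iff.1 hx U hU hxU
    exact ⟨h, h1⟩
  have horb : ∀ h : G, shiftMap h xstar ∈ Xs := fun h => hinv h _ hxstar
  constructor
  · rintro ⟨k, Ai, g, hcl, hAeq, hdisj, hsub, hdisj2⟩
    choose F hF using fun i => window_aux hclosed (hcl i)
    let FF : Finset G := Finset.univ.biUnion F
    let Ξ : (↥(FF : Set G) → Λ) → G := fun b =>
      if h : ∃ i, ∃ x ∈ Ai i, ∀ f : ↥(FF : Set G), x f.1 = b f then g h.choose else 1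
    have hΞ : ∀ i, ∀ x ∈ Ai i, Ξ (fun f => x f.1) = g i := by
      intro i x hx
      have h : ∃ j, ∃ y ∈ Ai j, ∀ f : ↥(FF : Set G), y f.1 = x f.1 :=
        ⟨i, x, hx, fun _ => rfl⟩
      have e : Ξ (fun f => x f.1) = g h.choose := dif_pos h
      rw [e]
      obtain ⟨y, hy, hyx⟩ := h.choose_spec
      have hx2 : x ∈ Ai h.choose := hF _ y hy x ((hcl i).1 hx) fun f hf =>
        hyx ⟨f, by
          simp only [FF, Finset.mem_coe]
          exact Finset.mem_biUnion.2 ⟨_, Finset.mem_univ _, hf⟩⟩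
      by_contra hne
      have hne' : h.choose ≠ i := fun h' => hne (by rw [h'])
      exact Set.disjoint_left.1 (hdisj hne') hx2 hx
    refine ⟨fun a => Ξ (fun f => shiftMap a xstar f.1) * a,
      ⟨FF, insert 1 (Finset.univ.image g), Ξ, ?_, fun _ => rfl⟩, ?_, ?_⟩
    · intro b
      simp only [Ξ]
      split_ifs <;> simp
    · intro a ha
      simp only [Set.mem_ofPred_eq, hAeq, Set.mem_iUnion] at ha ⊢
      obtain ⟨i, hi⟩ := ha
      rw [hΞ i _ hi, ← shift_shift_aux]
      exact hsub i ⟨_, hi, rfl⟩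
    · intro a ha a' ha' heq
      simp only [Set.mem_ofPred_eq, hAeq, Set.mem_iUnion] at ha ha' heq
      obtain ⟨i, hi⟩ := ha
      obtain ⟨j, hj⟩ := ha'
      rw [hΞ i _ hi, hΞ j _ hj] at heq
      have hij : i = j := by
        by_contra hne
        refine Set.disjoint_left.1 (hdisj2 hne) ⟨_, hi, rfl⟩ ⟨_, hj, ?_⟩
        rw [shift_shift_aux, shift_shift_aux, heq]
      subst hij
      exact mul_left_cancel heq
  · rintro ⟨φt, ⟨F, E, Ξ, hE, hφ⟩, hmaps, hinj⟩
    let P : G → Set (G → Λ) := fun e => {x | Ξ (fun f => x f.1) = e}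
    have hP : ∀ e, IsClopen (P e) := by
      intro e
      have hc : Continuous (fun (x : G → Λ) (f : ↥(F : Set G)) => x f.1) := by fun_prop
      exact (isClopen_discrete {b | Ξ b = e}).preimage hc
    have hcl : ∀ e, RelClopen Xs (A ∩ P e) := fun e =>
      ⟨fun x hx => hA.1 hx.1, hA.2.inter ((hP e).preimage continuous_subtype_val)⟩
    refine ⟨E.card, fun i => A ∩ P (E.equivFin.symm i).1, fun i => (E.equivFin.symm i).1,
      fun i => hcl _, ?_, ?_, ?_, ?_⟩
    · ext x
      simp only [Set.mem_iUnion]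
      constructor
      · intro hx
        refine ⟨E.equivFin ⟨_, hE (fun f => x f.1)⟩, hx, ?_⟩
        simp [P]
      · rintro ⟨i, hi⟩
        exact hi.1
    · intro i j hij
      refine Set.disjoint_left.2 fun x hx hx' => hij ?_
      exact E.equivFin.symm.injective (Subtype.ext (hx.2.symm.trans hx'.2))
    · rintro i _ ⟨x, hx, rfl⟩
      dsimp only at hx ⊢
      generalize (E.equivFin.symm i).1 = e at hx ⊢
      by_contra hnot
      obtain ⟨U, hU, hU'⟩ := open_of_relClopen_aux (hcl e)
      obtain ⟨V, hV, hV'⟩ := coopen_of_relClopen_aux hB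
      have hxX := hA.1 hx.1
      obtain ⟨h, h1, h2⟩ := dense (U ∩ shiftMap e ⁻¹' V)
        (hU.inter (hV.preimage (shift_cont_aux e))) x hxX
        ⟨(hU' x hxX).2 hx, (hV' _ (hinv e x hxX)).2 hnot⟩
      have h3 := (hU' _ (horb h)).1 h1
      have h4 := (hV' _ (hinv e _ (horb h))).1 h2
      have h5 := hmaps h3.1
      have h6 : Ξ (fun f => shiftMap h xstar f.1) = e := h3.2
      rw [Set.mem_ofPred_eq, hφ, h6, ← shift_shift_aux] at h5
      exact h4 h5
    · intro i j hij
      have hne : (E.equivFin.symm i).1 ≠ (E.equivFin.symm j).1 := fun h =>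
        hij (E.equivFin.symm.injective (Subtype.ext h))
      refine Set.disjoint_left.2 ?_
      dsimp only
      generalize (E.equivFin.symm i).1 = e at hne
      generalize (E.equivFin.symm j).1 = e' at hne
      rintro _ ⟨x, hx, rfl⟩ ⟨y, hy, hyx⟩
      obtain ⟨U, hU, hU'⟩ := open_of_relClopen_aux (hcl e)
      obtain ⟨V, hV, hV'⟩ := open_of_relClopen_aux (hcl e')
      have hxX := hA.1 hx.1
      have hyX := hA.1 hy.1
      have hy2 : shiftMap (e'⁻¹ * e) x = y := by
        rw [← shift_shift_aux, ← hyx, shift_shift_aux]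
        funext a
        simp [shiftMap]
      obtain ⟨h, h1, h2⟩ := dense (U ∩ shiftMap (e'⁻¹ * e) ⁻¹' V)
        (hU.inter (hV.preimage (shift_cont_aux _))) x hxX
        ⟨(hU' x hxX).2 hx, by
          rw [Set.mem_preimage, hy2]
          exact (hV' y hyX).2 hy⟩
      have h3 := (hU' _ (horb h)).1 h1
      rw [Set.mem_preimage, shift_shift_aux] at h2
      have h4 := (hV' _ (horb _)).1 h2
      have h5 : Ξ (fun f => shiftMap h xstar f.1) = e := h3.2
      have h6 : Ξ (fun f => shiftMap (e'⁻¹ * e * h) xstar f.1) = e' := h4.2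
      have h7 : h = e'⁻¹ * e * h := hinj h3.1 h4.1 (by
        rw [hφ, hφ, h5, h6]
        group)
      have h8 : e'⁻¹ * e = 1 := by
        simpa using h7
      exact hne (inv_mul_eq_one.1 h8).symm
end
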